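/- For all μ, ν, λ ∈ 𝒫_p(𝒳_1 × 𝒫_p(𝒳_2)) the triangle inequality CW̄_p(μ, λ) ≤ CW̄_p(μ, ν) + CW̄_p(ν, λ) holds. -/

import Mathlib

open MeasureTheory ProbabilityTheory ENNReal Filter Topology

noncomputable section

namespace AWPaper

/-! ### Generic constructions -/

variable {α β : Type*}

/-- The set of couplings of two measures. -/
def Cpl [MeasurableSpace α] [MeasurableSpace β] (μ : Measure α) (ν : Measure β) :
    Set (Measure (α × β)) :=
  {π | π.map Prod.fst = μ ∧ π.map Prod.snd = ν}

/-- The `p`-Wasserstein distance (with values in `ℝ≥0∞`) associated to an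
`ℝ≥0∞`-valued distance function `d`. -/
def Wp [MeasurableSpace α] (p : ℝ) (d : α → α → ℝ≥0∞) (μ ν : Measure α) : ℝ≥0∞ :=
  ⨅ π ∈ Cpl μ ν, (∫⁻ z, d z.1 z.2 ^ p ∂π) ^ (1 / p)

/-- The topology generated by the open balls of an `ℝ≥0∞`-valued distance
function.  For a genuine metric this is the metric topology. -/
def ballTop (d : α → α → ℝ≥0∞) : TopologicalSpace α :=
  TopologicalSpace.generateFrom {s | ∃ x ε, 0 < ε ∧ s = {y | d x y < ε}}

/-- The product distance of two `ℝ≥0∞`-valued distances, `ℓ^p`-style. -/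
def prodDist (p : ℝ) (d₁ : α → α → ℝ≥0∞) (d₂ : β → β → ℝ≥0∞) :
    α × β → α × β → ℝ≥0∞ :=
  fun u v => (d₁ u.1 v.1 ^ p + d₂ u.2 v.2 ^ p) ^ (1 / p)

/-- Membership in the `p`-Wasserstein space: a probability measure with finite
`p`-th moment (w.r.t. the distance function `d`). -/
def MemPp [MeasurableSpace α] (p : ℝ) (d : α → α → ℝ≥0∞) (μ : Measure α) : Prop :=
  IsProbabilityMeasure μ ∧ ∃ x₀, ∫⁻ x, d x₀ x ^ p ∂μ ≠ ∞

/-- The weak topology on measures induced by integration of bounded continuous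
functions, for a given topology `τ` on the base space. -/
def weakTop [MeasurableSpace α] (τ : TopologicalSpace α) : TopologicalSpace (Measure α) :=
  TopologicalSpace.induced
    (fun μ => fun f : @BoundedContinuousFunction α ℝ τ _ => ∫ x, f x ∂μ)
    Pi.topologicalSpace

/-- The product topology built from two explicitly given topologies. -/
def prodTop (τ₁ : TopologicalSpace α) (τ₂ : TopologicalSpace β) : TopologicalSpace (α × β) :=
  TopologicalSpace.induced Prod.fst τ₁ ⊓ TopologicalSpace.induced Prod.snd τ₂

/-- An everywhere-defined version of the disintegration kernel: it agrees with
`Measure.condKernel` on finite measures. -/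
def condK [MeasurableSpace α] [MeasurableSpace β] [StandardBorelSpace β] [Nonempty β]
    (ρ : Measure (α × β)) : Kernel α β :=
  letI := Classical.dec (IsFiniteMeasure ρ)
  if h : IsFiniteMeasure ρ then @Measure.condKernel α β _ _ _ _ ρ h else 0

/-- The disintegration map `𝒫(A × B) → 𝒫(A × 𝒫(B))`. -/
def disint [MeasurableSpace α] [MeasurableSpace β] [StandardBorelSpace β] [Nonempty β]
    (μ : Measure (α × β)) : Measure (α × Measure β) :=
  μ.map (fun z => (z.1, condK μ z.1))

/-- The intensity ("und") map `𝒫(A × 𝒫(B)) → 𝒫(A × B)`. -/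
def und [MeasurableSpace α] [MeasurableSpace β] (μ : Measure (α × Measure β)) :
    Measure (α × β) :=
  μ.bind (fun z => (Measure.dirac z.1).prod z.2)

/-! ### Path spaces -/

variable {X : Type*} [MeasurableSpace X]

/-- The path-space distance `ρ̄((x_t),(y_t)) = (∑ ρ(x_t,y_t)^p)^{1/p}`. -/
def pathDist (p : ℝ) (d : X → X → ℝ≥0∞) {N : ℕ} :
    (Fin N → X) → (Fin N → X) → ℝ≥0∞ :=
  fun x y => (∑ t, d (x t) (y t) ^ p) ^ (1 / p)

/-- The first `t` coordinates of a path. -/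
def restr {N : ℕ} (t : ℕ) (h : t ≤ N) (x : Fin N → X) : Fin t → X :=
  fun s => x (Fin.castLE h s)

/-- The last `N - t` coordinates of a path. -/
def tailr {N : ℕ} (t : ℕ) (h : t ≤ N) (x : Fin N → X) : Fin (N - t) → X :=
  fun s => x ⟨t + s.1, by have := s.2; omega⟩

/-- A coupling `π` of two path measures is causal: for every `t` and Borel
`A ⊆ 𝒳^t`, `π((Y_1,…,Y_t) ∈ A | X) = π((Y_1,…,Y_t) ∈ A | X_1,…,X_t)` a.s. -/
def Causal {N : ℕ} (π : Measure ((Fin N → X) × (Fin N → X))) : Prop :=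
  ∀ (t : ℕ) (h : t ≤ N) (A : Set (Fin t → X)), MeasurableSet A →
    (π[fun z => A.indicator (fun _ => (1 : ℝ)) (restr t h z.2) |
        MeasurableSpace.comap Prod.fst inferInstance])
      =ᵐ[π]
    (π[fun z => A.indicator (fun _ => (1 : ℝ)) (restr t h z.2) |
        MeasurableSpace.comap (fun z => restr t h z.1) inferInstance])

/-- Bicausal couplings. -/
def Bicausal {N : ℕ} (π : Measure ((Fin N → X) × (Fin N → X))) : Prop :=
  Causal π ∧ Causal (π.map Prod.swap)

/-- The causal Wasserstein "distance" `CW_p`. -/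
def CW (p : ℝ) (d : X → X → ℝ≥0∞) {N : ℕ} (μ ν : Measure (Fin N → X)) : ℝ≥0∞ :=
  ⨅ π ∈ {π ∈ Cpl μ ν | Causal π}, (∫⁻ z, pathDist p d z.1 z.2 ^ p ∂π) ^ (1 / p)

/-- The symmetrized causal Wasserstein distance `SCW_p`. -/
def SCW (p : ℝ) (d : X → X → ℝ≥0∞) {N : ℕ} (μ ν : Measure (Fin N → X)) : ℝ≥0∞ :=
  max (CW p d μ ν) (CW p d ν μ)

/-- The adapted (nested, bicausal) Wasserstein distance `AW_p`. -/
def AW (p : ℝ) (d : X → X → ℝ≥0∞) {N : ℕ} (μ ν : Measure (Fin N → X)) : ℝ≥0∞ :=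
  ⨅ π ∈ {π ∈ Cpl μ ν | Bicausal π}, (∫⁻ z, pathDist p d z.1 z.2 ^ p ∂π) ^ (1 / p)

/-! ### Nested spaces (Pflug's nested distributions / Vershik's iterated spaces) -/

/-- A measurable space together with an `ℝ≥0∞`-valued distance. -/
structure QMS : Type 1 where
  carrier : Type
  inst : MeasurableSpace carrier
  dist : carrier → carrier → ℝ≥0∞

/-- The nested sequence of spaces: `nest X _ d p 0 = 𝒳` (this is `𝒳_N`), and
`nest X _ d p (k+1) = 𝒳 × 𝒫(nest X _ d p k)` with the nested distance
`D = (ρ^p + 𝒲_p^p)^{1/p}`.  Thus `𝒳_1` (for `N = k+1` time points) is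
`nest X _ d p k`. -/
def nest (X : Type) (mX : MeasurableSpace X) (d : X → X → ℝ≥0∞) (p : ℝ) : ℕ → QMS
  | 0 => ⟨X, mX, d⟩
  | (k + 1) =>
    let Q := nest X mX d p k
    ⟨X × @Measure Q.carrier Q.inst,
      @Prod.instMeasurableSpace _ _ mX (@Measure.instMeasurableSpace _ Q.inst),
      fun a b => (d a.1 b.1 ^ p + (@Wp _ Q.inst p Q.dist a.2 b.2) ^ p) ^ (1 / p)⟩

section NMapSec

variable (Y : Type) [mY : MeasurableSpace Y] [TopologicalSpace Y] [PolishSpace Y]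
  [BorelSpace Y] [Nonempty Y]

/-- The map `𝒩` sending the law of a process with `k+1` time steps to the
corresponding nested distribution, via iterated regular conditional laws. -/
def NMap (d : Y → Y → ℝ≥0∞) (p : ℝ) :
    ∀ k : ℕ, Measure (Fin (k + 1) → Y) →
      @Measure (nest Y mY d p k).carrier (nest Y mY d p k).inst
  | 0, μ =>
    letI : MeasurableSpace (nest Y mY d p 0).carrier := (nest Y mY d p 0).inst
    μ.map (fun x => x 0)
  | (k + 1), μ =>
    letI : MeasurableSpace (nest Y mY d p k).carrier := (nest Y mY d p k).inst
    letI : MeasurableSpace (nest Y mY d p (k + 1)).carrier := (nest Y mY d p (k + 1)).inst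
    (μ.map (fun x => x 0)).map
      (fun x₀ => (x₀, NMap d p k
        ((condK (μ.map (fun x => (x 0, fun s : Fin (k + 1) => x s.succ)))) x₀)))

end NMapSec

section PathStructures

variable {Y : Type*} [mY : MeasurableSpace Y]

/-- A process `L` is adapted: `L t` depends only on the first `t+1` coordinates. -/
def AdaptedProc {N : ℕ} (L : Fin N → (Fin N → Y) → ℝ) : Prop :=
  ∀ (t : Fin N) (x y : Fin N → Y), (∀ s : Fin N, s ≤ t → x s = y s) → L t x = L t y

/-- `τ` is a stopping time of the canonical filtration on the path space. -/
def IsStopTime {N : ℕ} (τ : (Fin N → Y) → Fin N) : Prop :=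
  ∀ t : Fin N,
    MeasurableSet[MeasurableSpace.comap (restr (X := Y) (t.1 + 1) t.2) inferInstance]
      {x | τ x = t}

/-- The optimal stopping value `v^L(μ)`. -/
def stopVal {N : ℕ} (L : Fin N → (Fin N → Y) → ℝ) (μ : Measure (Fin N → Y)) : ℝ :=
  ⨅ τ : {τ : (Fin N → Y) → Fin N // IsStopTime τ}, ∫ x, L (τ.1 x) x ∂μ

variable [TopologicalSpace Y]

/-- `AC(X̄)`: adapted processes which are continuous and bounded. -/
def ACbdd {N : ℕ} (L : Fin N → (Fin N → Y) → ℝ) : Prop :=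
  (∀ t, Continuous (L t)) ∧ AdaptedProc L ∧ ∃ C : ℝ, ∀ t x, |L t x| ≤ C

/-- `AC_p(X̄)`: adapted continuous processes of growth of order `p`. -/
def ACp (p : ℝ) (d : Y → Y → ℝ≥0∞) {N : ℕ} (L : Fin N → (Fin N → Y) → ℝ) : Prop :=
  (∀ t, Continuous (L t)) ∧ AdaptedProc L ∧
    ∃ (C : ℝ) (x₀ : Fin N → Y), ∀ t x, |L t x| ≤ C * (1 + ((pathDist p d x₀ x) ^ p).toReal)

/-- The optimal stopping topology (weak version, bounded continuous rewards). -/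
def stopTopW (N : ℕ) : TopologicalSpace (Measure (Fin N → Y)) :=
  ⨅ L : {L : Fin N → (Fin N → Y) → ℝ // ACbdd L},
    TopologicalSpace.induced (stopVal L.1) inferInstance

/-- The `𝒲_p`-optimal stopping topology. -/
def stopTopWp (p : ℝ) (d : Y → Y → ℝ≥0∞) (N : ℕ) :
    TopologicalSpace (Measure (Fin N → Y)) :=
  ⨅ L : {L : Fin N → (Fin N → Y) → ℝ // ACp p d L},
    TopologicalSpace.induced (stopVal L.1) inferInstance

variable [PolishSpace Y] [BorelSpace Y] [Nonempty Y]

/-- Hellwig's map `I_t`, sending `μ` to the joint law of the first `t`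
coordinates together with the conditional law of the remaining coordinates. -/
def infoMap (N t : ℕ) (h : t ≤ N) (μ : Measure (Fin N → Y)) :
    Measure ((Fin t → Y) × Measure (Fin (N - t) → Y)) :=
  μ.map (fun x => (restr t h x,
    condK (μ.map (fun y => (restr t h y, tailr t h y))) (restr t h x)))

/-- Hellwig's information topology (weak version). -/
def infoTopW (N : ℕ) : TopologicalSpace (Measure (Fin N → Y)) :=
  ⨅ (t : ℕ) (_ : 1 ≤ t) (h : t ≤ N - 1),
    TopologicalSpace.induced (infoMap N t (le_trans h (Nat.sub_le N 1)))
      (weakTop (prodTop Pi.topologicalSpace (weakTop Pi.topologicalSpace)))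

/-- The `𝒲_p`-information topology. -/
def infoTopWp (p : ℝ) (d : Y → Y → ℝ≥0∞) (N : ℕ) :
    TopologicalSpace (Measure (Fin N → Y)) :=
  ⨅ (t : ℕ) (_ : 1 ≤ t) (h : t ≤ N - 1),
    TopologicalSpace.induced (infoMap N t (le_trans h (Nat.sub_le N 1)))
      (ballTop (Wp p (prodDist p (pathDist p d) (Wp p (pathDist p d)))))

/-- Aldous' prediction process `Z_t^μ` (as a function of the path). -/
def predict (N : ℕ) (μ : Measure (Fin N → Y)) (t : ℕ) (h : t ≤ N) :
    (Fin N → Y) → Measure (Fin N → Y) :=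
  fun x => condK (μ.map (fun y => (restr t h y, y))) (restr t h x)

/-- Aldous' map `E`, sending `μ` to the joint law of the path together with its
prediction process. -/
def aldousMap (N : ℕ) (μ : Measure (Fin N → Y)) :
    Measure ((Fin N → Y) × (Fin (N + 1) → Measure (Fin N → Y))) :=
  μ.map (fun x =>
    (x, fun t : Fin (N + 1) => predict N μ t.1 (Nat.lt_succ_iff.mp t.2) x))

/-- Aldous' extended weak topology. -/
def aldousTopW (N : ℕ) : TopologicalSpace (Measure (Fin N → Y)) :=
  TopologicalSpace.induced (aldousMap N)
    (weakTop (prodTop Pi.topologicalSpace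
      (@Pi.topologicalSpace (Fin (N + 1)) (fun _ => Measure (Fin N → Y))
        (fun _ => weakTop Pi.topologicalSpace))))

/-- The extended `𝒲_p`-topology. -/
def aldousTopWp (p : ℝ) (d : Y → Y → ℝ≥0∞) (N : ℕ) :
    TopologicalSpace (Measure (Fin N → Y)) :=
  TopologicalSpace.induced (aldousMap N)
    (ballTop (Wp p (prodDist p (pathDist p d)
      (fun Z Z' : Fin (N + 1) → Measure (Fin N → Y) =>
        (∑ t, Wp p (pathDist p d) (Z t) (Z' t) ^ p) ^ (1 / p)))))

end PathStructures

/-! ### The lifted two-time-point space `𝒳₁ × 𝒫_p(𝒳₂)` -/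

section Lifted

variable {A B : Type*} [MeasurableSpace A] [MeasurableSpace B]

/-- The nested distance on `𝒳₁ × 𝒫_p(𝒳₂)`. -/
def liftDist (p : ℝ) (dA : A → A → ℝ≥0∞) (dB : B → B → ℝ≥0∞) :
    (A × Measure B) → (A × Measure B) → ℝ≥0∞ :=
  fun u v => (dA u.1 v.1 ^ p + Wp p dB u.2 v.2 ^ p) ^ (1 / p)

/-- `η` is a version of the measure-valued conditional expectation
`E_γ[X̂₂ | Y⃗]` (i.e. the barycenter of a regular conditional law of `X̂₂`
given `Y⃗ = (Y₁, Ŷ₂)`). -/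
def IsCondBar (γ : Measure ((A × Measure B) × (A × Measure B)))
    (η : (A × Measure B) × (A × Measure B) → Measure B) : Prop :=
  (∃ g : (A × Measure B) → Measure B, Measurable g ∧ ∀ z, η z = g z.2) ∧
  (∀ z, IsProbabilityMeasure (η z)) ∧
  ∀ S : Set (A × Measure B), MeasurableSet S → ∀ E : Set B, MeasurableSet E →
    ∫⁻ z in {z | z.2 ∈ S}, η z E ∂γ = ∫⁻ z in {z | z.2 ∈ S}, z.1.2 E ∂γ

/-- `AW̄_p`, the `p`-Wasserstein distance on `𝒫_p(𝒳₁ × 𝒫_p(𝒳₂))`. -/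
def AWbar (p : ℝ) (dA : A → A → ℝ≥0∞) (dB : B → B → ℝ≥0∞)
    (μ ν : Measure (A × Measure B)) : ℝ≥0∞ :=
  Wp p (liftDist p dA dB) μ ν

/-- `CW̄_p`, the lifted causal Wasserstein "distance". -/
def CWbar (p : ℝ) (dA : A → A → ℝ≥0∞) (dB : B → B → ℝ≥0∞)
    (μ ν : Measure (A × Measure B)) : ℝ≥0∞ :=
  ⨅ γ ∈ Cpl μ ν, ⨅ η ∈ {η | IsCondBar γ η},
    (∫⁻ z, (dA z.1.1 z.2.1 ^ p + Wp p dB (η z) z.2.2 ^ p) ∂γ) ^ (1 / p)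

/-- `SCW̄_p`, the symmetrization of `CW̄_p`. -/
def SCWbar (p : ℝ) (dA : A → A → ℝ≥0∞) (dB : B → B → ℝ≥0∞)
    (μ ν : Measure (A × Measure B)) : ℝ≥0∞ :=
  max (CWbar p dA dB μ ν) (CWbar p dA dB ν μ)

/-- Membership in `𝒫_p(𝒳₁ × 𝒫_p(𝒳₂))`: a probability measure, concentrated on
`𝒳₁ × 𝒫_p(𝒳₂)`, with finite `p`-th moment for the nested distance. -/
def MemPpLift (p : ℝ) (dA : A → A → ℝ≥0∞) (dB : B → B → ℝ≥0∞)
    (μ : Measure (A × Measure B)) : Prop :=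
  IsProbabilityMeasure μ ∧ (∀ᵐ z ∂μ, MemPp p dB z.2) ∧
    ∃ z₀ : A × Measure B, MemPp p dB z₀.2 ∧ ∫⁻ z, liftDist p dA dB z₀ z ^ p ∂μ ≠ ∞

/-- Two-time-point causality: given a coupling `π` of measures on products
`A₁ × B₁` and `A₂ × B₂`, the conditional law of `Y₁` given `X = (X₁, X₂)`
coincides with the conditional law of `Y₁` given `X₁`. -/
def Causal2 {A₁ B₁ A₂ B₂ : Type*} [MeasurableSpace A₁] [MeasurableSpace B₁]
    [MeasurableSpace A₂] [MeasurableSpace B₂]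
    (π : Measure ((A₁ × B₁) × (A₂ × B₂))) : Prop :=
  ∀ S : Set A₂, MeasurableSet S →
    (π[fun z => S.indicator (fun _ => (1 : ℝ)) z.2.1 |
        MeasurableSpace.comap Prod.fst inferInstance])
      =ᵐ[π]
    (π[fun z => S.indicator (fun _ => (1 : ℝ)) z.2.1 |
        MeasurableSpace.comap (fun z => z.1.1) inferInstance])

/-- The two-time-point causal Wasserstein "distance" on `𝒫_p(𝒳₁ × 𝒳₂)`. -/
def CW2 (p : ℝ) (dA : A → A → ℝ≥0∞) (dB : B → B → ℝ≥0∞)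
    (μ ν : Measure (A × B)) : ℝ≥0∞ :=
  ⨅ π ∈ {π ∈ Cpl μ ν | Causal2 π},
    (∫⁻ z, (dA z.1.1 z.2.1 ^ p + dB z.1.2 z.2.2 ^ p) ∂π) ^ (1 / p)

end Lifted



section Retract

/-- code a measure on `ℝ` by its rational cdf. -/
def ratCode (m : Measure ℝ) : ℚ → ℝ := fun q => m.real (Set.Iic (q : ℝ))

def ratDecode (f : ℚ → ℝ) : Measure ℝ :=
  (stieltjesOfMeasurableRat (id : (ℚ → ℝ) → ℚ → ℝ) measurable_id f).measure

lemma measurable_ratCode : Measurable ratCode := by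
  refine measurable_pi_lambda _ fun q => ?_
  exact (Measure.measurable_coe measurableSet_Iic).ennreal_toReal

lemma measurable_ratDecode : Measurable ratDecode :=
  measurable_measure_stieltjesOfMeasurableRat measurable_id

lemma isRatStieltjesPoint_ratCode (m : Measure ℝ) [IsProbabilityMeasure m] :
    IsRatStieltjesPoint (id : (ℚ → ℝ) → ℚ → ℝ) (ratCode m) := by
  have h : ∀ q : ℚ, ratCode m q = cdf m q := fun q => (cdf_eq_real m q).symm
  have h' : ratCode m = fun q : ℚ => cdf m q := funext h
  refine ⟨?_, ?_, ?_, ?_⟩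
  · intro a b hab
    simp only [id, h]
    exact monotone_cdf m (by exact_mod_cast hab)
  · simp only [id, h']
    exact (tendsto_cdf_atTop m).comp (tendsto_ratCast_atTop_iff.2 tendsto_id)
  · simp only [id, h']
    exact (tendsto_cdf_atBot m).comp (tendsto_ratCast_atBot_iff.2 tendsto_id)
  · intro t
    simp only [id, h]
    rw [← (cdf m).iInf_rat_gt_eq t]
    exact (Equiv.subtypeEquivRight (fun r : ℚ => by simp)).iInf_congr (fun _ => rfl)

lemma ratDecode_ratCode (m : Measure ℝ) [IsProbabilityMeasure m] :
    ratDecode (ratCode m) = m := by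
  have key : stieltjesOfMeasurableRat (id : (ℚ → ℝ) → ℚ → ℝ) measurable_id (ratCode m)
      = cdf m := by
    ext x
    rw [← StieltjesFunction.iInf_rat_gt_eq, ← StieltjesFunction.iInf_rat_gt_eq]
    congr 1
    ext r
    rw [stieltjesOfMeasurableRat_eq, toRatCDF_of_isRatStieltjesPoint (isRatStieltjesPoint_ratCode m),
      cdf_eq_real]
    rfl
  rw [ratDecode, key, measure_cdf]

variable {B : Type*} [MeasurableSpace B] [StandardBorelSpace B] [Nonempty B]

lemma exists_retract (A B : Type*) [MeasurableSpace A] [MeasurableSpace B] [StandardBorelSpace B]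
    [Nonempty B] :
    ∃ (e : A × Measure B → A × (ℚ → ℝ)) (R : A × (ℚ → ℝ) → A × Measure B),
      Measurable e ∧ Measurable R ∧ ∀ z, IsProbabilityMeasure z.2 → R (e z) = z := by
  have he := measurableEmbedding_embeddingReal B
  refine ⟨fun z => (z.1, ratCode (z.2.map (embeddingReal B))),
    fun z => (z.1, (ratDecode z.2).map he.invFun), ?_, ?_, ?_⟩
  · exact measurable_fst.prodMk (measurable_ratCode.comp
      ((Measure.measurable_map _ he.measurable).comp measurable_snd))
  · exact measurable_fst.prodMk ((Measure.measurable_map _ he.measurable_invFun).comp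
      (measurable_ratDecode.comp measurable_snd))
  · intro z hz
    have := Measure.isProbabilityMeasure_map (μ := z.2) he.measurable.aemeasurable
    simp only
    rw [ratDecode_ratCode, Measure.map_map he.measurable_invFun he.measurable,
      he.leftInverse_invFun.id, Measure.map_id]

/-- Disintegration for measures on `α × (A × Measure B)` concentrated on probability measures. -/
lemma exists_kernel {α A B : Type*} [MeasurableSpace α] [MeasurableSpace A] [StandardBorelSpace A]
    [Nonempty A] [MeasurableSpace B] [StandardBorelSpace B] [Nonempty B]
    (γ : Measure (α × (A × Measure B))) [IsProbabilityMeasure γ]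
    (h : ∀ᵐ z ∂γ, IsProbabilityMeasure z.2.2) :
    ∃ κ : Kernel α (A × Measure B), IsMarkovKernel κ ∧ γ.map Prod.fst ⊗ₘ κ = γ := by
  obtain ⟨e, R, he, hR, hRe⟩ := exists_retract A B
  let γ' : Measure (α × (A × (ℚ → ℝ))) := γ.map (Prod.map id e)
  have hm : Measurable (Prod.map (id : α → α) e) := measurable_id.prodMap he
  have hm' : Measurable (Prod.map (id : α → α) R) := measurable_id.prodMap hR
  have : IsProbabilityMeasure γ' := Measure.isProbabilityMeasure_map hm.aemeasurable
  refine ⟨γ'.condKernel.map R, Kernel.IsMarkovKernel.map _ hR, ?_⟩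
  have h1 : γ.map Prod.fst = γ'.fst := by
    rw [Measure.fst, Measure.map_map measurable_fst hm]; rfl
  rw [h1, Measure.compProd_map hR, γ'.disintegrate γ'.condKernel, Measure.map_map hm' hm]
  conv_rhs => rw [← Measure.map_id (μ := γ)]
  refine Measure.map_congr ?_
  filter_upwards [h] with z hz
  simp only [Function.comp, Prod.map, id]
  rw [hRe _ hz]

end Retract

section Glue

variable {α β δ : Type*} [MeasurableSpace α] [MeasurableSpace β] [MeasurableSpace δ]

def glue (γ : Measure (α × β)) (κ : Kernel β δ) : Measure ((α × β) × δ) :=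
  γ ⊗ₘ (κ.comap Prod.snd measurable_snd)

lemma glue_map_fst (γ : Measure (α × β)) [IsProbabilityMeasure γ] (κ : Kernel β δ)
    [IsMarkovKernel κ] : (glue γ κ).map Prod.fst = γ :=
  Measure.fst_compProd _ _

lemma glue_map_snd (γ : Measure (α × β)) [IsProbabilityMeasure γ] (κ : Kernel β δ)
    [IsMarkovKernel κ] : (glue γ κ).map (fun t => (t.1.2, t.2)) = γ.map Prod.snd ⊗ₘ κ := by
  have : IsProbabilityMeasure (γ.map Prod.snd) :=
    Measure.isProbabilityMeasure_map measurable_snd.aemeasurable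
  ext s hs
  have hm : Measurable (fun t : (α × β) × δ => (t.1.2, t.2)) := by fun_prop
  rw [Measure.map_apply hm hs, glue, Measure.compProd_apply (hm hs), Measure.compProd_apply hs,
    lintegral_map (Kernel.measurable_kernel_prodMk_left hs) measurable_snd]
  rfl

instance (γ : Measure (α × β)) [IsProbabilityMeasure γ] (κ : Kernel β δ)
    [IsMarkovKernel κ] : IsProbabilityMeasure (glue γ κ) := by
  unfold glue; infer_instance

end Glue


set_option linter.unusedSectionVars false

section WpBasics

variable {B : Type*} [MetricSpace B] [CompleteSpace B] [SecondCountableTopology B]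
  [MeasurableSpace B] [BorelSpace B] [Nonempty B]

lemma Cpl.isProb {α β : Type*} [MeasurableSpace α] [MeasurableSpace β] {μ : Measure α}
    {ν : Measure β} [IsProbabilityMeasure μ] {π : Measure (α × β)} (h : π ∈ Cpl μ ν) :
    IsProbabilityMeasure π := by
  constructor
  have := congrArg (fun m => m Set.univ) h.1
  simpa [Measure.map_apply measurable_fst MeasurableSet.univ] using this

lemma Wp_le {α : Type*} [MeasurableSpace α] {p : ℝ} {d : α → α → ℝ≥0∞} {μ ν : Measure α}
    {π : Measure (α × α)} (h : π ∈ Cpl μ ν) :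
    Wp p d μ ν ≤ (∫⁻ z, d z.1 z.2 ^ p ∂π) ^ (1 / p) :=
  iInf₂_le π h

lemma Wp_rpow_le {α : Type*} [MeasurableSpace α] {p : ℝ} (hp : 1 ≤ p) {d : α → α → ℝ≥0∞}
    {μ ν : Measure α} {π : Measure (α × α)} (h : π ∈ Cpl μ ν) :
    Wp p d μ ν ^ p ≤ ∫⁻ z, d z.1 z.2 ^ p ∂π := by
  have hp0 : p ≠ 0 := by linarith
  refine (ENNReal.rpow_le_rpow (Wp_le h) (by linarith)).trans ?_
  rw [← ENNReal.rpow_mul, one_div_mul_cancel hp0, ENNReal.rpow_one]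

lemma exists_cpl_of_Wp_lt {α : Type*} [MeasurableSpace α] {p : ℝ} {d : α → α → ℝ≥0∞}
    {μ ν : Measure α} {c : ℝ≥0∞} (h : Wp p d μ ν < c) :
    ∃ π ∈ Cpl μ ν, (∫⁻ z, d z.1 z.2 ^ p ∂π) ^ (1 / p) < c := by
  unfold Wp at h
  simpa only [iInf_lt_iff, exists_prop] using h

lemma exists_cpl_of_Wp_rpow_lt {α : Type*} [MeasurableSpace α] {p : ℝ} (hp : 1 ≤ p)
    {d : α → α → ℝ≥0∞}
    {μ ν : Measure α} {c : ℝ≥0∞} (h : Wp p d μ ν ^ p < c) :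
    ∃ π ∈ Cpl μ ν, ∫⁻ z, d z.1 z.2 ^ p ∂π < c := by
  have hp0 : 0 < p := by linarith
  have : Wp p d μ ν < c ^ (1 / p) := by
    rwa [one_div, ENNReal.lt_rpow_inv_iff hp0]
  obtain ⟨π, hπ, hlt⟩ := exists_cpl_of_Wp_lt this
  exact ⟨π, hπ, (ENNReal.rpow_lt_rpow_iff (by positivity)).1 hlt⟩

lemma map_mem_Cpl {α β : Type*} [MeasurableSpace α] [MeasurableSpace β] (m : Measure α)
    {f g : α → β} (hf : Measurable f) (hg : Measurable g) :
    m.map (fun x => (f x, g x)) ∈ Cpl (m.map f) (m.map g) :=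
  ⟨by rw [Measure.map_map measurable_fst (hf.prodMk hg)]; rfl,
    by rw [Measure.map_map measurable_snd (hf.prodMk hg)]; rfl⟩

lemma Wp_map_le {α : Type*} [MeasurableSpace α] (p : ℝ) (m : Measure α)
    {f g : α → B} (hf : Measurable f) (hg : Measurable g) :
    Wp p edist (m.map f) (m.map g) ≤ (∫⁻ x, edist (f x) (g x) ^ p ∂m) ^ (1 / p) := by
  refine (Wp_le (map_mem_Cpl m hf hg)).trans_eq ?_
  rw [lintegral_map (by fun_prop) (hf.prodMk hg)]

lemma Wp_triangle {p : ℝ} (hp : 1 ≤ p) (m₁ m₂ m₃ : Measure B) [IsProbabilityMeasure m₁]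
    [IsProbabilityMeasure m₂] :
    Wp p edist m₁ m₃ ≤ Wp p edist m₁ m₂ + Wp p edist m₂ m₃ := by
  unfold Wp
  simp_rw [ENNReal.iInf_add, ENNReal.add_iInf]
  refine le_iInf₂ fun π₁ h₁ => le_iInf₂ fun π₂ h₂ => ?_
  have := Cpl.isProb h₁
  have := Cpl.isProb h₂
  let Θ := glue π₁ π₂.condKernel
  have hΘ1 : Θ.map Prod.fst = π₁ := glue_map_fst _ _
  have hΘ2 : Θ.map (fun t => (t.1.2, t.2)) = π₂ := by
    rw [glue_map_snd, h₁.2, ← h₂.1]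
    exact π₂.disintegrate π₂.condKernel
  have hmem : Θ.map (fun t => (t.1.1, t.2)) ∈ Cpl m₁ m₃ := by
    constructor
    · rw [Measure.map_map (by fun_prop) (by fun_prop), ← h₁.1, ← hΘ1,
        Measure.map_map (by fun_prop) (by fun_prop)]; rfl
    · rw [Measure.map_map (by fun_prop) (by fun_prop), ← h₂.2, ← hΘ2,
        Measure.map_map (by fun_prop) (by fun_prop)]; rfl
  refine (iInf₂_le _ hmem).trans ?_
  rw [lintegral_map (by fun_prop) (by fun_prop)]
  conv_rhs => rw [← hΘ1]
  conv_rhs => enter [2]; rw [← hΘ2]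
  rw [lintegral_map (by fun_prop) (by fun_prop), lintegral_map (by fun_prop) (by fun_prop)]
  refine le_trans ?_ (ENNReal.lintegral_Lp_add_le (by fun_prop) (by fun_prop) hp)
  refine ENNReal.rpow_le_rpow (lintegral_mono fun t => ?_) (by positivity)
  exact ENNReal.rpow_le_rpow (edist_triangle _ _ _) (by positivity)

lemma Wp_convex {p : ℝ} (hp : 1 ≤ p) (m n m' n' : Measure B) (s t : ℝ≥0∞) (hst : s + t = 1)
    (h : Wp p edist m n ≠ ∞) (h' : Wp p edist m' n' ≠ ∞) :
    Wp p edist (s • m + t • m') (s • n + t • n') ^ p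
      ≤ s * Wp p edist m n ^ p + t * Wp p edist m' n' ^ p := by
  have hp0 : 0 ≤ p := by linarith
  refine ENNReal.le_of_forall_pos_le_add fun ε hε _ => ?_
  have hε' : (ε : ℝ≥0∞) ≠ 0 := by exact_mod_cast hε.ne'
  obtain ⟨π, hπ, hlt⟩ := exists_cpl_of_Wp_rpow_lt hp
    (ENNReal.lt_add_right (ENNReal.rpow_ne_top_of_nonneg hp0 h) hε')
  obtain ⟨π', hπ', hlt'⟩ := exists_cpl_of_Wp_rpow_lt hp
    (ENNReal.lt_add_right (ENNReal.rpow_ne_top_of_nonneg hp0 h') hε')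
  have hmem : s • π + t • π' ∈ Cpl (s • m + t • m') (s • n + t • n') := by
    constructor
    · rw [Measure.map_add _ _ measurable_fst, Measure.map_smul, Measure.map_smul, hπ.1, hπ'.1]
    · rw [Measure.map_add _ _ measurable_snd, Measure.map_smul, Measure.map_smul, hπ.2, hπ'.2]
  refine (Wp_rpow_le hp hmem).trans ?_
  rw [lintegral_add_measure, lintegral_smul_measure, lintegral_smul_measure, smul_eq_mul,
    smul_eq_mul]
  calc _ ≤ s * (Wp p edist m n ^ p + ε) + t * (Wp p edist m' n' ^ p + ε) := by gcongr
    _ = s * Wp p edist m n ^ p + t * Wp p edist m' n' ^ p + (s + t) * ε := by ring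
    _ = _ := by rw [hst, one_mul]

/-- `p`-th moment -/
def mom (p : ℝ) (x₀ : B) (m : Measure B) : ℝ≥0∞ := ∫⁻ x, edist x₀ x ^ p ∂m

lemma measurable_mom (p : ℝ) (x₀ : B) : Measurable (mom p x₀) :=
  Measure.measurable_lintegral (by fun_prop)

lemma mom_le {p : ℝ} (hp : 1 ≤ p) (x₀ : B) (m n : Measure B) :
    mom p x₀ n ^ (1 / p) ≤ mom p x₀ m ^ (1 / p) + Wp p edist m n := by
  unfold Wp
  simp_rw [ENNReal.add_iInf]
  refine le_iInf₂ fun π h => ?_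
  rw [mom, mom, ← h.1, ← h.2, lintegral_map (by fun_prop) (by fun_prop),
    lintegral_map (by fun_prop) (by fun_prop)]
  refine le_trans ?_ (ENNReal.lintegral_Lp_add_le (by fun_prop) (by fun_prop) hp)
  refine ENNReal.rpow_le_rpow (lintegral_mono fun t => ?_) (by positivity)
  exact ENNReal.rpow_le_rpow (edist_triangle _ _ _) (by positivity)

end WpBasics

set_option linter.unusedSectionVars false

section FiniteCase

variable {B : Type*} [MetricSpace B] [CompleteSpace B] [SecondCountableTopology B]
  [MeasurableSpace B] [BorelSpace B] [Nonempty B]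
variable {D : Type*} [Fintype D]

/-- finitely supported measure with weights `a` -/
def finM (s : D → B) (a : D → ℝ) : Measure B := ∑ i, ENNReal.ofReal (a i) • Measure.dirac (s i)

lemma finM_prob (s : D → B) {a : D → ℝ} (ha : a ∈ stdSimplex ℝ D) :
    IsProbabilityMeasure (finM s a) := by
  constructor
  simp only [finM, Measure.coe_finsetSum, Finset.sum_apply, Measure.smul_apply, measure_univ,
    smul_eq_mul, mul_one]
  rw [← ENNReal.ofReal_sum_of_nonneg (fun i _ => ha.1 i), ha.2, ENNReal.ofReal_one]

def finC (p : ℝ) (s : D → B) : ℝ≥0∞ := ∑ i, ∑ j, edist (s i) (s j) ^ p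

lemma finC_ne_top {p : ℝ} (hp : 1 ≤ p) (s : D → B) : finC p s ≠ ∞ := by
  simp only [finC, ne_eq, ENNReal.sum_eq_top, not_exists, not_and]
  intro i _
  push Not
  intro j _
  exact ENNReal.rpow_ne_top_of_nonneg (by linarith) (edist_ne_top _ _)

lemma map_finsum_smul_dirac {ι α β : Type*} [MeasurableSpace α] [MeasurableSpace β] (t : Finset ι)
    (c : ι → ℝ≥0∞)
    (x : ι → α) {f : α → β} (hf : Measurable f) :
    (∑ i ∈ t, c i • Measure.dirac (x i)).map f = ∑ i ∈ t, c i • Measure.dirac (f (x i)) := by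
  rw [← Measure.mapₗ_apply_of_measurable hf, map_sum]
  simp [Measure.mapₗ_apply_of_measurable hf, Measure.map_dirac' hf]

lemma Wp_finM_le {p : ℝ} (hp : 1 ≤ p) (s : D → B) {a b : D → ℝ} (ha : a ∈ stdSimplex ℝ D)
    (hb : b ∈ stdSimplex ℝ D) :
    Wp p edist (finM s a) (finM s b) ^ p ≤ finC p s * ENNReal.ofReal (∑ i, |a i - b i|) := by
  set c : D → ℝ := fun i => min (a i) (b i) with hc
  set r : D → ℝ := fun i => a i - c i with hr
  set q : D → ℝ := fun i => b i - c i with hq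
  have hc0 : ∀ i, 0 ≤ c i := fun i => le_min (ha.1 i) (hb.1 i)
  have hr0 : ∀ i, 0 ≤ r i := fun i => sub_nonneg.2 (min_le_left _ _)
  have hq0 : ∀ i, 0 ≤ q i := fun i => sub_nonneg.2 (min_le_right _ _)
  set Δ := ∑ i, r i with hΔ
  have hΔq : ∑ i, q i = Δ := by
    simp only [hΔ, hr, hq, Finset.sum_sub_distrib, ha.2, hb.2]
  have hΔ0 : 0 ≤ Δ := Finset.sum_nonneg fun i _ => hr0 i
  have hrle : ∀ i, r i ≤ Δ := fun i => Finset.single_le_sum (fun j _ => hr0 j) (Finset.mem_univ i)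
  have hqle : ∀ i, q i ≤ Δ := fun i => by
    rw [← hΔq]; exact Finset.single_le_sum (fun j _ => hq0 j) (Finset.mem_univ i)
  have hrow : ∀ i, ∑ j, r i * q j / Δ = r i := by
    intro i
    rw [← Finset.sum_div, ← Finset.mul_sum, hΔq]
    by_cases h : Δ = 0
    · have : r i = 0 := le_antisymm (h ▸ hrle i) (hr0 i)
      simp [this]
    · field_simp
  have hcol : ∀ j, ∑ i, r i * q j / Δ = q j := by
    intro j
    rw [← Finset.sum_div, ← Finset.sum_mul]
    by_cases h : Δ = 0
    · have : q j = 0 := le_antisymm (h ▸ hqle j) (hq0 j)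
      simp [this]
    · rw [← hΔ]; field_simp
  have hnn : ∀ i j, 0 ≤ r i * q j / Δ := fun i j => div_nonneg (mul_nonneg (hr0 i) (hq0 j)) hΔ0
  let π : Measure (B × B) := ∑ i, ENNReal.ofReal (c i) • Measure.dirac (s i, s i)
    + ∑ z : D × D, ENNReal.ofReal (r z.1 * q z.2 / Δ) • Measure.dirac (s z.1, s z.2)
  have hmem : π ∈ Cpl (finM s a) (finM s b) := by
    constructor
    · rw [Measure.map_add _ _ measurable_fst, map_finsum_smul_dirac _ _ _ measurable_fst,
        map_finsum_smul_dirac _ _ _ measurable_fst, Fintype.sum_prod_type, finM,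
        ← Finset.sum_add_distrib]
      refine Finset.sum_congr rfl fun i _ => ?_
      simp only
      rw [← Finset.sum_smul, ← add_smul, ← ENNReal.ofReal_sum_of_nonneg (fun j _ => hnn i j),
        hrow, ← ENNReal.ofReal_add (hc0 i) (hr0 i)]
      simp [hr]
    · rw [Measure.map_add _ _ measurable_snd, map_finsum_smul_dirac _ _ _ measurable_snd,
        map_finsum_smul_dirac _ _ _ measurable_snd, Fintype.sum_prod_type_right, finM,
        ← Finset.sum_add_distrib]
      refine Finset.sum_congr rfl fun j _ => ?_
      simp only
      rw [← Finset.sum_smul, ← add_smul, ← ENNReal.ofReal_sum_of_nonneg (fun i _ => hnn i j),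
        hcol, ← ENNReal.ofReal_add (hc0 j) (hq0 j)]
      simp [hq]
  refine (Wp_rpow_le hp hmem).trans ?_
  have hpp : 0 < p := by linarith
  have hm : Measurable fun z : B × B => edist z.1 z.2 ^ p := by fun_prop
  rw [lintegral_add_measure, lintegral_finsetSum_measure, lintegral_finsetSum_measure]
  simp only [lintegral_smul_measure, lintegral_dirac' _ hm, edist_self, ENNReal.zero_rpow_of_pos hpp,
    mul_zero, Finset.sum_const_zero, zero_add, smul_eq_mul]
  rw [Fintype.sum_prod_type, finC, Finset.sum_mul]
  refine Finset.sum_le_sum fun i _ => ?_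
  rw [Finset.sum_mul]
  refine Finset.sum_le_sum fun j _ => ?_
  rw [mul_comm]
  gcongr
  calc r i * q j / Δ ≤ q j :=
        (Finset.single_le_sum (fun i _ => hnn i j) (Finset.mem_univ i)).trans_eq (hcol j)
    _ ≤ |a j - b j| := by
        simp only [hq, hc]
        rcases le_total (a j) (b j) with h | h
        · rw [min_eq_left h, abs_sub_comm]; exact le_abs_self _
        · rw [min_eq_right h]; simp
    _ ≤ _ := Finset.single_le_sum (f := fun i => |a i - b i|) (fun i _ => abs_nonneg _)
        (Finset.mem_univ j)

lemma Wp_finM_ne_top {p : ℝ} (hp : 1 ≤ p) (s : D → B) {a b : D → ℝ} (ha : a ∈ stdSimplex ℝ D)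
    (hb : b ∈ stdSimplex ℝ D) : Wp p edist (finM s a) (finM s b) ≠ ∞ := by
  intro h
  have := Wp_finM_le hp s ha hb
  rw [h, ENNReal.top_rpow_of_pos (by linarith), top_le_iff] at this
  exact ENNReal.mul_ne_top (finC_ne_top hp s) ENNReal.ofReal_ne_top this

lemma finM_comb (s : D → B) (a b : D → ℝ) (ha : ∀ i, 0 ≤ a i) (hb : ∀ i, 0 ≤ b i) (x y : ℝ)
    (hx : 0 ≤ x) (hy : 0 ≤ y) :
    finM s (x • a + y • b) = ENNReal.ofReal x • finM s a + ENNReal.ofReal y • finM s b := by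
  simp only [finM, Finset.smul_sum, ← Finset.sum_add_distrib]
  refine Finset.sum_congr rfl fun i _ => ?_
  rw [smul_smul, smul_smul, ← add_smul, Pi.add_apply, Pi.smul_apply, Pi.smul_apply, smul_eq_mul,
    smul_eq_mul, ENNReal.ofReal_add (mul_nonneg hx (ha i)) (mul_nonneg hy (hb i)),
    ENNReal.ofReal_mul hx, ENNReal.ofReal_mul hy]

def finG (p : ℝ) (s : D → B) (u : (D → ℝ) × (D → ℝ)) : ℝ :=
  (Wp p edist (finM s u.1) (finM s u.2) ^ p).toReal

def simp2 (D : Type*) [Fintype D] : Set ((D → ℝ) × (D → ℝ)) := stdSimplex ℝ D ×ˢ stdSimplex ℝ D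

lemma finG_convex {p : ℝ} (hp : 1 ≤ p) (s : D → B) : ConvexOn ℝ (simp2 D) (finG p s) := by
  refine ⟨(convex_stdSimplex ℝ D).prod (convex_stdSimplex ℝ D), ?_⟩
  rintro ⟨a, b⟩ ⟨ha, hb⟩ ⟨a', b'⟩ ⟨ha', hb'⟩ x y hx hy hxy
  simp only at ha hb ha' hb'
  have h1 := Wp_finM_ne_top hp s ha hb
  have h2 := Wp_finM_ne_top hp s ha' hb'
  have hp0 : 0 ≤ p := by linarith
  have h := Wp_convex hp (finM s a) (finM s b) (finM s a') (finM s b') (ENNReal.ofReal x)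
    (ENNReal.ofReal y) (by rw [← ENNReal.ofReal_add hx hy, hxy, ENNReal.ofReal_one]) h1 h2
  rw [← finM_comb s a a' ha.1 ha'.1 x y hx hy, ← finM_comb s b b' hb.1 hb'.1 x y hx hy] at h
  have e1 : ENNReal.ofReal x * Wp p edist (finM s a) (finM s b) ^ p ≠ ∞ :=
    ENNReal.mul_ne_top ENNReal.ofReal_ne_top (ENNReal.rpow_ne_top_of_nonneg hp0 h1)
  have e2 : ENNReal.ofReal y * Wp p edist (finM s a') (finM s b') ^ p ≠ ∞ :=
    ENNReal.mul_ne_top ENNReal.ofReal_ne_top (ENNReal.rpow_ne_top_of_nonneg hp0 h2)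
  have h3 := ENNReal.toReal_mono (ENNReal.add_ne_top.2 ⟨e1, e2⟩) h
  rw [ENNReal.toReal_add e1 e2, ENNReal.toReal_mul, ENNReal.toReal_mul, ENNReal.toReal_ofReal hx,
    ENNReal.toReal_ofReal hy] at h3
  exact h3

lemma finG_cont {p : ℝ} (hp : 1 ≤ p) (s : D → B) : ContinuousOn (finG p s) (simp2 D) := by
  have hp0 : 0 < p := by linarith
  set w : (D → ℝ) × (D → ℝ) → ℝ := fun u => (Wp p edist (finM s u.1) (finM s u.2)).toReal with hw
  have hG : finG p s = fun u => w u ^ p := by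
    ext u; simp only [finG, hw, ENNReal.toReal_rpow]
  rw [hG]
  refine ContinuousOn.rpow_const ?_ (fun _ _ => Or.inr hp0.le)
  set h : (D → ℝ) → (D → ℝ) → ℝ := fun a b => ((finC p s).toReal * ∑ i, |a i - b i|) ^ (1 / p)
    with hh
  have hw_le : ∀ a ∈ stdSimplex ℝ D, ∀ b ∈ stdSimplex ℝ D, w (a, b) ≤ h a b := by
    intro a ha b hb
    have h1 := Wp_finM_le hp s ha hb
    have h2 := ENNReal.toReal_mono
      (ENNReal.mul_ne_top (finC_ne_top hp s) ENNReal.ofReal_ne_top) h1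
    rw [ENNReal.toReal_mul, ENNReal.toReal_ofReal (Finset.sum_nonneg fun i _ => abs_nonneg _),
      ← ENNReal.toReal_rpow] at h2
    rw [hh, one_div]
    exact (Real.le_rpow_inv_iff_of_pos ENNReal.toReal_nonneg
      (mul_nonneg ENNReal.toReal_nonneg (Finset.sum_nonneg fun i _ => abs_nonneg _)) hp0).2 h2
  have htri : ∀ a ∈ stdSimplex ℝ D, ∀ b ∈ stdSimplex ℝ D, ∀ c ∈ stdSimplex ℝ D,
      w (a, c) ≤ w (a, b) + w (b, c) := by
    intro a ha b hb c hc
    have := finM_prob s ha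
    have := finM_prob s hb
    have h1 := Wp_finM_ne_top hp s ha hb
    have h2 := Wp_finM_ne_top hp s hb hc
    have := ENNReal.toReal_mono (ENNReal.add_ne_top.2 ⟨h1, h2⟩)
      (Wp_triangle hp (finM s a) (finM s b) (finM s c))
    rwa [ENNReal.toReal_add h1 h2] at this
  have hsymm : ∀ a b, h a b = h b a := by
    intro a b; simp only [hh, abs_sub_comm]
  rintro ⟨a₀, b₀⟩ ⟨ha₀, hb₀⟩
  rw [ContinuousWithinAt, tendsto_iff_dist_tendsto_zero]
  have hlim : Tendsto (fun u : (D → ℝ) × (D → ℝ) => h u.1 a₀ + h u.2 b₀)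
      (𝓝[simp2 D] (a₀, b₀)) (𝓝 0) := by
    have hc : Continuous fun u : (D → ℝ) × (D → ℝ) => h u.1 a₀ + h u.2 b₀ := by
      have hq : 0 ≤ 1 / p := by positivity
      refine Continuous.add ?_ ?_
      · exact Continuous.rpow_const (by fun_prop) (fun _ => Or.inr hq)
      · exact Continuous.rpow_const (by fun_prop) (fun _ => Or.inr hq)
    have h0 : h a₀ a₀ + h b₀ b₀ = 0 := by
      have : 1 / p ≠ 0 := by positivity
      simp [hh, Real.zero_rpow, hp0.ne']
    have := hc.continuousWithinAt (s := simp2 D) (x := (a₀, b₀))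
    rw [ContinuousWithinAt] at this
    simpa only [h0] using this
  refine squeeze_zero' (Eventually.of_forall fun _ => dist_nonneg) ?_ hlim
  filter_upwards [self_mem_nhdsWithin] with u hu
  obtain ⟨a, b⟩ := u
  obtain ⟨ha, hb⟩ := hu
  simp only at ha hb ha₀ hb₀ ⊢
  rw [Real.dist_eq, abs_le]
  have i1 := htri a ha a₀ ha₀ b hb
  have i2 := htri a₀ ha₀ b₀ hb₀ b hb
  have i3 := htri a₀ ha₀ a ha b₀ hb₀
  have i4 := htri a ha b hb b₀ hb₀
  have j1 := hw_le a ha a₀ ha₀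
  have j2 := hw_le b₀ hb₀ b hb
  have j3 := hw_le a₀ ha₀ a ha
  have j4 := hw_le b hb b₀ hb₀
  rw [hsymm b₀ b] at j2
  rw [hsymm a₀ a] at j3
  constructor <;> linarith

lemma isClosed_simp2 : IsClosed (simp2 D) :=
  IsClosed.prod (isClosed_stdSimplex ℝ D) (isClosed_stdSimplex ℝ D)

lemma measurable_finG {p : ℝ} (hp : 1 ≤ p) (s : D → B) :
    Measurable ((simp2 D).indicator (finG p s)) := by
  classical
  have := (finG_cont hp s).measurable_piecewise (g := (0 : ((D → ℝ) × (D → ℝ)) → ℝ)) continuousOn_const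
    isClosed_simp2.measurableSet
  rwa [Set.piecewise_eq_indicator] at this

lemma finG_le {p : ℝ} (hp : 1 ≤ p) (s : D → B) {u : (D → ℝ) × (D → ℝ)} (hu : u ∈ simp2 D) :
    finG p s u ≤ (finC p s).toReal * 2 := by
  have h1 := Wp_finM_le hp s hu.1 hu.2
  have h2 := ENNReal.toReal_mono
    (ENNReal.mul_ne_top (finC_ne_top hp s) ENNReal.ofReal_ne_top) h1
  rw [ENNReal.toReal_mul, ENNReal.toReal_ofReal (Finset.sum_nonneg fun i _ => abs_nonneg _)] at h2
  refine h2.trans (mul_le_mul_of_nonneg_left ?_ ENNReal.toReal_nonneg)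
  calc ∑ i, |u.1 i - u.2 i| ≤ ∑ i, (u.1 i + u.2 i) := by
        refine Finset.sum_le_sum fun i _ => ?_
        have := hu.1.1 i
        have := hu.2.1 i
        rw [abs_le]; constructor <;> linarith
    _ = 2 := by rw [Finset.sum_add_distrib, hu.1.2, hu.2.2]; norm_num

lemma ofReal_finG {p : ℝ} (hp : 1 ≤ p) (s : D → B) {u : (D → ℝ) × (D → ℝ)} (hu : u ∈ simp2 D) :
    ENNReal.ofReal (finG p s u) = Wp p edist (finM s u.1) (finM s u.2) ^ p :=
  ENNReal.ofReal_toReal (ENNReal.rpow_ne_top_of_nonneg (by linarith)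
    (Wp_finM_ne_top hp s hu.1 hu.2))

lemma fin_jensen {p : ℝ} (hp : 1 ≤ p) (s : D → B) {Y : Type*} [MeasurableSpace Y] (κ : Measure Y)
    [IsProbabilityMeasure κ] (f : Y → (D → ℝ) × (D → ℝ)) (hf : Measurable f)
    (hfs : ∀ᵐ y ∂κ, f y ∈ simp2 D) :
    Wp p edist (finM s (∫ y, f y ∂κ).1) (finM s (∫ y, f y ∂κ).2) ^ p
      ≤ ∫⁻ y, Wp p edist (finM s (f y).1) (finM s (f y).2) ^ p ∂κ := by
  have hfi : Integrable f κ := by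
    refine Integrable.of_bound hf.aestronglyMeasurable 1 ?_
    filter_upwards [hfs] with y hy
    have key : ∀ a ∈ stdSimplex ℝ D, ‖a‖ ≤ 1 := by
      intro a ha
      refine (pi_norm_le_iff_of_nonneg zero_le_one).2 fun i => ?_
      rw [Real.norm_of_nonneg (ha.1 i), ← ha.2]
      exact Finset.single_le_sum (fun j _ => ha.1 j) (Finset.mem_univ i)
    exact max_le (key _ hy.1) (key _ hy.2)
  have hgm : AEStronglyMeasurable (finG p s ∘ f) κ := by
    refine ((measurable_finG hp s).comp hf).aestronglyMeasurable.congr ?_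
    filter_upwards [hfs] with y hy
    simp [Set.indicator_of_mem hy]
  have hgi : Integrable (finG p s ∘ f) κ := by
    refine Integrable.of_bound hgm ((finC p s).toReal * 2) ?_
    filter_upwards [hfs] with y hy
    rw [Function.comp, Real.norm_of_nonneg (show 0 ≤ finG p s (f y) from ENNReal.toReal_nonneg)]
    exact finG_le hp s hy
  have hJ := (finG_convex hp s).map_integral_le (finG_cont hp s) isClosed_simp2 hfs hfi hgi
  have hmem : ∫ y, f y ∂κ ∈ simp2 D :=
    (finG_convex hp s).1.integral_mem isClosed_simp2 hfs hfi
  rw [← ofReal_finG hp s hmem]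
  refine (ENNReal.ofReal_le_ofReal hJ).trans ?_
  have hgi2 : Integrable (fun y => finG p s (f y)) κ := hgi
  rw [ofReal_integral_eq_lintegral_ofReal hgi2
    (Eventually.of_forall fun _ => ENNReal.toReal_nonneg)]
  refine (lintegral_congr_ae ?_).le
  filter_upwards [hfs] with y hy
  exact ofReal_finG hp s hy

end FiniteCase

set_option linter.unusedSectionVars false

section General

variable {B : Type*} [MetricSpace B] [CompleteSpace B] [SecondCountableTopology B]
  [MeasurableSpace B] [BorelSpace B] [Nonempty B]

lemma integrable_of_simp2 {D : Type*} [Fintype D] {Y : Type*} [MeasurableSpace Y] (κ : Measure Y)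
    [IsProbabilityMeasure κ] (f : Y → (D → ℝ) × (D → ℝ)) (hf : Measurable f)
    (hfs : ∀ᵐ y ∂κ, f y ∈ simp2 D) : Integrable f κ := by
  refine Integrable.of_bound hf.aestronglyMeasurable 1 ?_
  filter_upwards [hfs] with y hy
  have key : ∀ a ∈ stdSimplex ℝ D, ‖a‖ ≤ 1 := by
    intro a ha
    refine (pi_norm_le_iff_of_nonneg zero_le_one).2 fun i => ?_
    rw [Real.norm_of_nonneg (ha.1 i), ← ha.2]
    exact Finset.single_le_sum (fun j _ => ha.1 j) (Finset.mem_univ i)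
  exact max_le (key _ hy.1) (key _ hy.2)

/-- weights of the image of a measure under a simple function -/
def wt (T : SimpleFunc B B) (m : Measure B) : T.range → ℝ := fun i => m.real (T ⁻¹' {i.1})

lemma measurable_wt (T : SimpleFunc B B) : Measurable (wt T) := by
  refine measurable_pi_lambda _ fun i => ?_
  exact (Measure.measurable_coe (T.measurableSet_fiber _)).ennreal_toReal

lemma wt_mem (T : SimpleFunc B B) (m : Measure B) [IsProbabilityMeasure m] :
    wt T m ∈ stdSimplex ℝ T.range := by
  refine ⟨fun i => measureReal_nonneg, ?_⟩
  have h := T.sum_range_measure_preimage_singleton m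
  rw [measure_univ] at h
  have h2 := congrArg ENNReal.toReal h
  rw [ENNReal.toReal_sum (fun _ _ => measure_ne_top _ _), ENNReal.toReal_one] at h2
  rw [← h2]
  exact Finset.sum_coe_sort T.range (fun i => m.real (T ⁻¹' {i}))

lemma finM_wt (T : SimpleFunc B B) (m : Measure B) [IsFiniteMeasure m] :
    finM (Subtype.val : T.range → B) (wt T m) = m.map T := by
  ext E hE
  rw [Measure.map_apply T.measurable hE]
  have h1 : m (T ⁻¹' E) = (T.map (E.indicator 1)).lintegral m := by
    rw [← SimpleFunc.lintegral_eq_lintegral, ← lintegral_indicator_one (T.measurable hE)]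
    rfl
  rw [h1, SimpleFunc.map_lintegral]
  simp only [finM, Measure.coe_finsetSum, Finset.sum_apply, Measure.smul_apply,
    Measure.dirac_apply' _ hE, smul_eq_mul]
  rw [← Finset.sum_coe_sort T.range]
  refine Finset.sum_congr rfl fun i _ => ?_
  rw [wt, ofReal_measureReal, mul_comm]

/-- measurable version of `Wp (m.map T) (n.map T)` -/
def Wk (p : ℝ) (T : SimpleFunc B B) (u : Measure B × Measure B) : ℝ≥0∞ :=
  ENNReal.ofReal ((simp2 T.range).indicator (finG p (Subtype.val : T.range → B))
    (wt T u.1, wt T u.2)) ^ (1 / p)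

lemma measurable_Wk {p : ℝ} (hp : 1 ≤ p) (T : SimpleFunc B B) : Measurable (Wk p T) := by
  unfold Wk
  have h := (measurable_finG hp (Subtype.val : T.range → B)).comp
    (((measurable_wt T).comp (measurable_fst (α := Measure B) (β := Measure B))).prodMk
      ((measurable_wt T).comp measurable_snd))
  exact h.ennreal_ofReal.pow_const _

lemma Wk_eq {p : ℝ} (hp : 1 ≤ p) (T : SimpleFunc B B) (m n : Measure B) [IsProbabilityMeasure m]
    [IsProbabilityMeasure n] : Wk p T (m, n) = Wp p edist (m.map T) (n.map T) := by
  have hmem : (wt T m, wt T n) ∈ simp2 T.range := ⟨wt_mem T m, wt_mem T n⟩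
  have hp0 : p ≠ 0 := by linarith
  simp only [Wk]
  rw [Set.indicator_of_mem hmem, ofReal_finG hp _ hmem, ← ENNReal.rpow_mul,
    mul_one_div_cancel hp0, ENNReal.rpow_one, finM_wt, finM_wt]

lemma bind_isProb {Y : Type*} [MeasurableSpace Y] (κ : Measure Y) [IsProbabilityMeasure κ]
    {m : Y → Measure B} (hm : Measurable m) (hmp : ∀ᵐ y ∂κ, IsProbabilityMeasure (m y)) :
    IsProbabilityMeasure (κ.bind m) := by
  constructor
  rw [Measure.bind_apply MeasurableSet.univ hm.aemeasurable]
  have : ∀ᵐ y ∂κ, m y Set.univ = 1 := hmp.mono fun y hy => hy.measure_univ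
  rw [lintegral_congr_ae this]
  simp

lemma wt_bind (T : SimpleFunc B B) {Y : Type*} [MeasurableSpace Y] (κ : Measure Y)
    [IsProbabilityMeasure κ]
    {m : Y → Measure B} (hm : Measurable m) (hmp : ∀ᵐ y ∂κ, IsProbabilityMeasure (m y))
    (i : T.range) :
    wt T (κ.bind m) i = ∫ y, wt T (m y) i ∂κ := by
  have hme : Measurable fun y => m y (T ⁻¹' {i.1}) :=
    (Measure.measurable_coe (T.measurableSet_fiber _)).comp hm
  simp only [wt, measureReal_def]
  rw [integral_toReal hme.aemeasurable, Measure.bind_apply (T.measurableSet_fiber _) hm.aemeasurable]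
  filter_upwards [hmp] with y hy
  exact measure_lt_top _ _

lemma simple_jensen {p : ℝ} (hp : 1 ≤ p) (T : SimpleFunc B B) {Y : Type*} [MeasurableSpace Y]
    (κ : Measure Y) [IsProbabilityMeasure κ] {m n : Y → Measure B} (hm : Measurable m)
    (hmp : ∀ᵐ y ∂κ, IsProbabilityMeasure (m y)) (hn : Measurable n)
    (hnp : ∀ᵐ y ∂κ, IsProbabilityMeasure (n y)) :
    Wp p edist ((κ.bind m).map T) ((κ.bind n).map T) ^ p
      ≤ ∫⁻ y, Wp p edist ((m y).map T) ((n y).map T) ^ p ∂κ := by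
  have := bind_isProb κ hm hmp
  have := bind_isProb κ hn hnp
  set f : Y → (T.range → ℝ) × (T.range → ℝ) := fun y => (wt T (m y), wt T (n y)) with hf
  have hfm : Measurable f := ((measurable_wt T).comp hm).prodMk ((measurable_wt T).comp hn)
  have hfs : ∀ᵐ y ∂κ, f y ∈ simp2 T.range := by
    filter_upwards [hmp, hnp] with y h1 h2
    exact ⟨wt_mem T _, wt_mem T _⟩
  have hfi := integrable_of_simp2 κ f hfm hfs
  have h := fin_jensen hp (Subtype.val : T.range → B) κ f hfm hfs
  have e1 : (∫ y, f y ∂κ).1 = wt T (κ.bind m) := by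
    rw [fst_integral hfi]
    ext i
    rw [wt_bind T κ hm hmp, eval_integral]
    intro j
    exact (Integrable.eval hfi.fst j)
  have e2 : (∫ y, f y ∂κ).2 = wt T (κ.bind n) := by
    rw [snd_integral hfi]
    ext i
    rw [wt_bind T κ hn hnp, eval_integral]
    intro j
    exact (Integrable.eval hfi.snd j)
  rw [e1, e2, finM_wt, finM_wt] at h
  refine h.trans_eq (lintegral_congr_ae ?_)
  filter_upwards [hmp, hnp] with y h1 h2
  simp only [hf, finM_wt]

/-- simple approximations of the identity -/
def apx (x₀ : B) (k : ℕ) : SimpleFunc B B :=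
  SimpleFunc.approxOn id measurable_id Set.univ x₀ trivial k

/-- approximation error -/
def er (p : ℝ) (x₀ : B) (k : ℕ) (m : Measure B) : ℝ≥0∞ :=
  (∫⁻ x, edist x (apx x₀ k x) ^ p ∂m) ^ (1 / p)

lemma measurable_er (p : ℝ) (x₀ : B) (k : ℕ) : Measurable (er p x₀ k) := by
  have : Measurable (apx x₀ k) := (apx x₀ k).measurable
  exact (Measure.measurable_lintegral (by fun_prop)).pow_const _

lemma tendsto_er {p : ℝ} (hp : 1 ≤ p) (x₀ : B) (m : Measure B) (hm : mom p x₀ m ≠ ∞) :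
    Tendsto (fun k => er p x₀ k m) atTop (𝓝 0) := by
  have hp0 : 0 < p := by linarith
  have hT : ∀ k, Measurable (apx x₀ k) := fun k => (apx x₀ k).measurable
  have h1 : Tendsto (fun k => ∫⁻ x, edist x (apx x₀ k x) ^ p ∂m) atTop (𝓝 (∫⁻ _, 0 ∂m)) := by
    refine tendsto_lintegral_of_dominated_convergence (fun x => edist x₀ x ^ p) (fun k => ?_)
      (fun k => ?_) hm ?_
    · have := hT k
      fun_prop
    · refine Eventually.of_forall fun x => ENNReal.rpow_le_rpow ?_ hp0.le
      rw [edist_comm]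
      exact SimpleFunc.edist_approxOn_le measurable_id (s := Set.univ) trivial x k
    · refine Eventually.of_forall fun x => ?_
      have h := SimpleFunc.tendsto_approxOn (measurable_id (α := B)) (s := Set.univ) (y₀ := x₀)
        trivial (x := x) (by simp)
      have h2 : Tendsto (fun k => edist x (apx x₀ k x)) atTop (𝓝 0) := by
        have := (tendsto_const_nhds (x := x)).edist h
        simpa [apx] using this
      have h3 := h2.ennrpow_const p
      rwa [ENNReal.zero_rpow_of_pos hp0] at h3
  have h2 := h1.ennrpow_const (1 / p)
  rw [lintegral_zero, ENNReal.zero_rpow_of_pos (by positivity)] at h2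
  exact h2

lemma Wp_apx_right (p : ℝ) (x₀ : B) (k : ℕ) (m : Measure B) :
    Wp p edist m (m.map (apx x₀ k)) ≤ er p x₀ k m := by
  have h := Wp_map_le p m measurable_id (apx x₀ k).measurable
  rw [Measure.map_id] at h
  exact h

lemma Wp_apx_left (p : ℝ) (x₀ : B) (k : ℕ) (m : Measure B) :
    Wp p edist (m.map (apx x₀ k)) m ≤ er p x₀ k m := by
  have h := Wp_map_le p m (apx x₀ k).measurable measurable_id
  rw [Measure.map_id] at h
  refine h.trans_eq ?_
  simp only [er, edist_comm, id]

lemma Wp_le_apx {p : ℝ} (hp : 1 ≤ p) (x₀ : B) (k : ℕ) (m n : Measure B) [IsProbabilityMeasure m]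
    [IsProbabilityMeasure n] : Wp p edist m n ≤
      er p x₀ k m + (Wp p edist (m.map (apx x₀ k)) (n.map (apx x₀ k)) + er p x₀ k n) := by
  have := Measure.isProbabilityMeasure_map (μ := m) (apx x₀ k).aemeasurable
  have := Measure.isProbabilityMeasure_map (μ := n) (apx x₀ k).aemeasurable
  refine (Wp_triangle hp m (m.map (apx x₀ k)) n).trans (add_le_add (Wp_apx_right _ _ _ _) ?_)
  refine (Wp_triangle hp _ (n.map (apx x₀ k)) n).trans ?_
  gcongr
  exact Wp_apx_left _ _ _ _

lemma apx_le_Wp {p : ℝ} (hp : 1 ≤ p) (x₀ : B) (k : ℕ) (m n : Measure B) [IsProbabilityMeasure m]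
    [IsProbabilityMeasure n] : Wp p edist (m.map (apx x₀ k)) (n.map (apx x₀ k)) ≤
      er p x₀ k m + (Wp p edist m n + er p x₀ k n) := by
  have := Measure.isProbabilityMeasure_map (μ := m) (apx x₀ k).aemeasurable
  have := Measure.isProbabilityMeasure_map (μ := n) (apx x₀ k).aemeasurable
  refine (Wp_triangle hp _ m _).trans (add_le_add (Wp_apx_left _ _ _ _) ?_)
  refine (Wp_triangle hp _ n _).trans ?_
  gcongr
  exact Wp_apx_right _ _ _ _

/-- measurable version of `Wp` -/
def What (p : ℝ) (x₀ : B) (u : Measure B × Measure B) : ℝ≥0∞ :=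
  limsup (fun k => Wk p (apx x₀ k) u) atTop

lemma measurable_What {p : ℝ} (hp : 1 ≤ p) (x₀ : B) : Measurable (What p x₀) :=
  Measurable.limsup fun k => measurable_Wk hp (apx x₀ k)

lemma What_eq {p : ℝ} (hp : 1 ≤ p) (x₀ : B) (m n : Measure B) [IsProbabilityMeasure m]
    [IsProbabilityMeasure n] (hm : mom p x₀ m ≠ ∞) (hn : mom p x₀ n ≠ ∞) :
    What p x₀ (m, n) = Wp p edist m n := by
  have em := tendsto_er hp x₀ m hm
  have en := tendsto_er hp x₀ n hn
  simp only [What, Wk_eq hp]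
  refine le_antisymm ?_ ?_
  · have h : Tendsto (fun k => er p x₀ k m + (Wp p edist m n + er p x₀ k n)) atTop
        (𝓝 (0 + (Wp p edist m n + 0))) := em.add (tendsto_const_nhds.add en)
    rw [zero_add, add_zero] at h
    rw [← h.limsup_eq]
    exact limsup_le_limsup (Eventually.of_forall fun k => apx_le_Wp hp x₀ k m n)
  · have h : Tendsto (fun k => er p x₀ k m + er p x₀ k n) atTop (𝓝 (0 + 0)) := em.add en
    rw [zero_add] at h
    by_contra hlt
    push Not at hlt
    obtain ⟨c, hc1, hc2⟩ := exists_between hlt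
    have hev := eventually_lt_of_limsup_lt hc1
    have h2 : Tendsto (fun k => (er p x₀ k m + er p x₀ k n) + c) atTop (𝓝 (0 + c)) :=
      h.add tendsto_const_nhds
    rw [zero_add] at h2
    refine absurd (ge_of_tendsto h2 (b := Wp p edist m n) ?_) (not_le.2 hc2)
    filter_upwards [hev] with k hk
    calc Wp p edist m n ≤ _ := Wp_le_apx hp x₀ k m n
      _ ≤ er p x₀ k m + (c + er p x₀ k n) := by gcongr
      _ = _ := by ring

lemma Wp_aemeasurable {p : ℝ} (hp : 1 ≤ p) (x₀ : B) {Y : Type*} [MeasurableSpace Y]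
    (κ : Measure Y) {m n : Y → Measure B} (hm : Measurable m)
    (hmp : ∀ᵐ y ∂κ, IsProbabilityMeasure (m y)) (hn : Measurable n)
    (hnp : ∀ᵐ y ∂κ, IsProbabilityMeasure (n y)) (hmm : ∀ᵐ y ∂κ, mom p x₀ (m y) ≠ ∞)
    (hnm : ∀ᵐ y ∂κ, mom p x₀ (n y) ≠ ∞) :
    AEMeasurable (fun y => Wp p edist (m y) (n y)) κ := by
  refine ⟨fun y => What p x₀ (m y, n y), (measurable_What hp x₀).comp (hm.prodMk hn), ?_⟩
  filter_upwards [hmp, hnp, hmm, hnm] with y h1 h2 h3 h4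
  exact (What_eq hp x₀ _ _ h3 h4).symm

lemma mom_bind {p : ℝ} (x₀ : B) {Y : Type*} [MeasurableSpace Y]
    (κ : Measure Y) {m : Y → Measure B} (hm : Measurable m) :
    mom p x₀ (κ.bind m) = ∫⁻ y, mom p x₀ (m y) ∂κ := by
  rw [mom, Measure.lintegral_bind hm.aemeasurable (by fun_prop)]
  rfl

lemma er_bind {p : ℝ} (hp : 1 ≤ p) (x₀ : B) (k : ℕ) {Y : Type*} [MeasurableSpace Y]
    (κ : Measure Y) {m : Y → Measure B} (hm : Measurable m) :
    (∫⁻ y, er p x₀ k (m y) ^ p ∂κ) ^ (1 / p) = er p x₀ k (κ.bind m) := by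
  have hp0 : p ≠ 0 := by linarith
  have : Measurable (apx x₀ k) := (apx x₀ k).measurable
  rw [er, Measure.lintegral_bind hm.aemeasurable (by fun_prop)]
  simp only [er, ← ENNReal.rpow_mul, one_div_mul_cancel hp0, ENNReal.rpow_one]

lemma Wp_jensen {p : ℝ} (hp : 1 ≤ p) (x₀ : B) {Y : Type*} [MeasurableSpace Y]
    (κ : Measure Y) [IsProbabilityMeasure κ] {m n : Y → Measure B} (hm : Measurable m)
    (hmp : ∀ᵐ y ∂κ, IsProbabilityMeasure (m y)) (hn : Measurable n)
    (hnp : ∀ᵐ y ∂κ, IsProbabilityMeasure (n y)) (hmm : ∫⁻ y, mom p x₀ (m y) ∂κ ≠ ∞)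
    (hnm : ∫⁻ y, mom p x₀ (n y) ∂κ ≠ ∞) :
    Wp p edist (κ.bind m) (κ.bind n) ≤ (∫⁻ y, Wp p edist (m y) (n y) ^ p ∂κ) ^ (1 / p) := by
  have hp0 : 0 < p := by linarith
  have := bind_isProb κ hm hmp
  have := bind_isProb κ hn hnp
  have hW : AEMeasurable (fun y => Wp p edist (m y) (n y)) κ := by
    refine Wp_aemeasurable hp x₀ κ hm hmp hn hnp ?_ ?_
    · exact (ae_lt_top ((measurable_mom p x₀).comp hm) hmm).mono fun y hy => hy.ne
    · exact (ae_lt_top ((measurable_mom p x₀).comp hn) hnm).mono fun y hy => hy.ne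
  have em := tendsto_er hp x₀ (κ.bind m) (by rwa [mom_bind x₀ κ hm])
  have en := tendsto_er hp x₀ (κ.bind n) (by rwa [mom_bind x₀ κ hn])
  set J := (∫⁻ y, Wp p edist (m y) (n y) ^ p ∂κ) ^ (1 / p) with hJ
  have key : ∀ k, Wp p edist (κ.bind m) (κ.bind n) ≤ er p x₀ k (κ.bind m) +
      ((er p x₀ k (κ.bind m) + (J + er p x₀ k (κ.bind n))) + er p x₀ k (κ.bind n)) := by
    intro k
    refine (Wp_le_apx hp x₀ k _ _).trans ?_
    gcongr
    have h1 := ENNReal.rpow_le_rpow (simple_jensen hp (apx x₀ k) κ hm hmp hn hnp)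
      (show 0 ≤ 1 / p by positivity)
    rw [← ENNReal.rpow_mul, mul_one_div_cancel hp0.ne', ENNReal.rpow_one] at h1
    refine h1.trans ?_
    have mm : AEMeasurable (fun y => er p x₀ k (m y)) κ :=
      ((measurable_er p x₀ k).comp hm).aemeasurable
    have mn : AEMeasurable (fun y => er p x₀ k (n y)) κ :=
      ((measurable_er p x₀ k).comp hn).aemeasurable
    calc (∫⁻ y, Wp p edist ((m y).map (apx x₀ k)) ((n y).map (apx x₀ k)) ^ p ∂κ) ^ (1 / p)
        ≤ (∫⁻ y, ((fun y => er p x₀ k (m y)) + ((fun y => Wp p edist (m y) (n y)) +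
            fun y => er p x₀ k (n y))) y ^ p ∂κ) ^ (1 / p) := by
          refine ENNReal.rpow_le_rpow (lintegral_mono_ae ?_) (by positivity)
          filter_upwards [hmp, hnp] with y h1 h2
          exact ENNReal.rpow_le_rpow (apx_le_Wp hp x₀ k _ _) hp0.le
      _ ≤ _ := ENNReal.lintegral_Lp_add_le mm (hW.add mn) hp
      _ ≤ _ := by
          rw [er_bind hp x₀ k κ hm]
          gcongr
          refine (ENNReal.lintegral_Lp_add_le hW mn hp).trans ?_
          rw [er_bind hp x₀ k κ hn]
  have hlim : Tendsto (fun k => er p x₀ k (κ.bind m) +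
      ((er p x₀ k (κ.bind m) + (J + er p x₀ k (κ.bind n))) + er p x₀ k (κ.bind n))) atTop
      (𝓝 (0 + ((0 + (J + 0)) + 0))) :=
    em.add ((em.add (tendsto_const_nhds.add en)).add en)
  simp only [zero_add, add_zero] at hlim
  exact ge_of_tendsto' hlim key

end General

set_option linter.unusedSectionVars false

section Main

variable {A B : Type*} [MetricSpace A] [CompleteSpace A] [SecondCountableTopology A]
  [MeasurableSpace A] [BorelSpace A] [Nonempty A] [MetricSpace B] [CompleteSpace B]
  [SecondCountableTopology B] [MeasurableSpace B] [BorelSpace B] [Nonempty B]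

lemma mom_ne_top {p : ℝ} (hp : 1 ≤ p) (x₀ : B) {m : Measure B} (hm : MemPp p edist m) :
    mom p x₀ m ≠ ∞ := by
  obtain ⟨hprob, x₁, hx⟩ := hm
  have hp0 : 0 ≤ p := by linarith
  have h : mom p x₀ m ≤ 2 ^ (p - 1) * (edist x₀ x₁ ^ p + ∫⁻ x, edist x₁ x ^ p ∂m) := by
    calc mom p x₀ m ≤ ∫⁻ x, 2 ^ (p - 1) * (edist x₀ x₁ ^ p + edist x₁ x ^ p) ∂m := by
          refine lintegral_mono fun x => ?_
          exact (ENNReal.rpow_le_rpow (edist_triangle _ x₁ _) hp0).trans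
            (ENNReal.rpow_add_le_mul_rpow_add_rpow _ _ hp)
      _ = _ := by
          rw [lintegral_const_mul _ (by fun_prop), lintegral_add_left (by fun_prop), lintegral_const,
            measure_univ, mul_one]
  refine ne_top_of_le_ne_top (ENNReal.mul_ne_top ?_ (ENNReal.add_ne_top.2 ⟨?_, hx⟩)) h
  · exact ENNReal.rpow_ne_top_of_nonneg (by linarith) (by simp)
  · exact ENNReal.rpow_ne_top_of_nonneg hp0 (edist_ne_top _ _)

lemma MemPpLift.mom {p : ℝ} (hp : 1 ≤ p) (x₀ : B) {μ : Measure (A × Measure B)}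
    (hμ : MemPpLift p edist edist μ) : ∫⁻ z, mom p x₀ z.2 ∂μ ≠ ∞ := by
  obtain ⟨hprob, -, z₀, hz₀, hfin⟩ := hμ
  have hp0 : 0 < p := by linarith
  have hM := mom_ne_top hp x₀ hz₀
  have h : ∫⁻ z, AWPaper.mom p x₀ z.2 ∂μ ≤
      2 ^ (p - 1) * (AWPaper.mom p x₀ z₀.2 + ∫⁻ z, liftDist p edist edist z₀ z ^ p ∂μ) := by
    calc ∫⁻ z, AWPaper.mom p x₀ z.2 ∂μ
        ≤ ∫⁻ z, 2 ^ (p - 1) * (AWPaper.mom p x₀ z₀.2 + liftDist p edist edist z₀ z ^ p) ∂μ := by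
          refine lintegral_mono fun z => ?_
          have h1 := ENNReal.rpow_le_rpow (mom_le hp x₀ z₀.2 z.2) hp0.le
          rw [← ENNReal.rpow_mul, one_div_mul_cancel hp0.ne', ENNReal.rpow_one] at h1
          refine h1.trans ((ENNReal.rpow_add_le_mul_rpow_add_rpow _ _ hp).trans ?_)
          rw [← ENNReal.rpow_mul, one_div_mul_cancel hp0.ne', ENNReal.rpow_one, liftDist,
            ← ENNReal.rpow_mul, one_div_mul_cancel hp0.ne', ENNReal.rpow_one]
          gcongr
          exact le_add_self
      _ = _ := by
          rw [lintegral_const_mul' _ _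
              (ENNReal.rpow_ne_top_of_nonneg (by linarith) (by simp)),
            lintegral_add_left (by fun_prop), lintegral_const,
            measure_univ, mul_one]
  refine ne_top_of_le_ne_top (ENNReal.mul_ne_top ?_ (ENNReal.add_ne_top.2 ⟨hM, hfin⟩)) h
  exact ENNReal.rpow_ne_top_of_nonneg (by linarith) (by simp)

/-- a.e. equality of measure-valued maps can be checked on countably many sets -/
lemma ae_measure_eq {Y : Type*} [MeasurableSpace Y] {ν : Measure Y} {m n : Y → Measure B}
    (hm : ∀ᵐ y ∂ν, IsProbabilityMeasure (m y)) (hn : ∀ᵐ y ∂ν, IsProbabilityMeasure (n y))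
    (h : ∀ E, MeasurableSet E → ∀ᵐ y ∂ν, m y E = n y E) : ∀ᵐ y ∂ν, m y = n y := by
  set C := generateSetAlgebra (MeasurableSpace.countableGeneratingSet B) with hC
  have hgen : (inferInstance : MeasurableSpace B) = MeasurableSpace.generateFrom C := by
    rw [hC, generateFrom_generateSetAlgebra_eq]
    exact (MeasurableSpace.generateFrom_countableGeneratingSet).symm
  have hc : C.Countable :=
    countable_generateSetAlgebra (MeasurableSpace.countable_countableGeneratingSet)
  have hpi : IsPiSystem C := fun s hs t ht _ => isSetAlgebra_generateSetAlgebra.inter_mem hs ht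
  have hall : ∀ᵐ y ∂ν, ∀ E ∈ C, m y E = n y E := by
    rw [ae_ball_iff hc]
    intro E hE
    refine h E ?_
    exact hgen.ge E (MeasurableSpace.measurableSet_generateFrom hE)
  filter_upwards [hm, hn, hall] with y h1 h2 h3
  exact ext_of_generate_finite C hgen hpi h3 (by simp)

variable {μ ν : Measure (A × Measure B)} [IsProbabilityMeasure μ] [IsProbabilityMeasure ν]

lemma exists_disint (hμ : ∀ᵐ z ∂μ, IsProbabilityMeasure z.2)
    {γ : Measure ((A × Measure B) × (A × Measure B))} (h : γ ∈ Cpl μ ν) :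
    ∃ κ : Kernel (A × Measure B) (A × Measure B), IsMarkovKernel κ ∧ ν ⊗ₘ κ = γ.map Prod.swap := by
  have := Cpl.isProb h
  have : IsProbabilityMeasure (γ.map Prod.swap) :=
    Measure.isProbabilityMeasure_map measurable_swap.aemeasurable
  obtain ⟨κ, hκ, hk⟩ := exists_kernel (γ.map Prod.swap) (by
    have e : (γ.map Prod.swap).map Prod.snd = μ := by
      rw [Measure.map_map measurable_snd measurable_swap, ← h.1]; rfl
    rw [← e] at hμ
    exact ae_of_ae_map measurable_snd.aemeasurable hμ)
  refine ⟨κ, hκ, ?_⟩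
  have e : (γ.map Prod.swap).map Prod.fst = ν := by
    rw [Measure.map_map measurable_fst measurable_swap, ← h.2]; rfl
  rwa [e] at hk

lemma disint_lintegral {γ : Measure ((A × Measure B) × (A × Measure B))}
    {κ : Kernel (A × Measure B) (A × Measure B)} [IsMarkovKernel κ]
    (hκ : ν ⊗ₘ κ = γ.map Prod.swap) {f : (A × Measure B) × (A × Measure B) → ℝ≥0∞}
    (hf : Measurable f) :
    ∫⁻ y, ∫⁻ x, f (x, y) ∂κ y ∂ν = ∫⁻ z, f z ∂γ := by
  have h := Measure.lintegral_compProd (μ := ν) (κ := κ) (f := f ∘ Prod.swap)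
    (hf.comp measurable_swap)
  rw [hκ, lintegral_map (hf.comp measurable_swap) measurable_swap] at h
  simpa using h.symm

lemma disint_ae_prob (hμ : ∀ᵐ z ∂μ, IsProbabilityMeasure z.2)
    {γ : Measure ((A × Measure B) × (A × Measure B))} (h : γ ∈ Cpl μ ν)
    {κ : Kernel (A × Measure B) (A × Measure B)} [IsMarkovKernel κ]
    (hκ : ν ⊗ₘ κ = γ.map Prod.swap) :
    ∀ᵐ y ∂ν, ∀ᵐ x ∂κ y, IsProbabilityMeasure x.2 := by
  have e : (ν ⊗ₘ κ).map Prod.snd = μ := by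
    rw [hκ, Measure.map_map measurable_snd measurable_swap, ← h.1]; rfl
  rw [← e] at hμ
  exact Measure.ae_ae_of_ae_compProd (ae_of_ae_map measurable_snd.aemeasurable hμ)

lemma disint_bar {γ : Measure ((A × Measure B) × (A × Measure B))} (h : γ ∈ Cpl μ ν)
    {κ : Kernel (A × Measure B) (A × Measure B)} [IsMarkovKernel κ]
    (hκ : ν ⊗ₘ κ = γ.map Prod.swap) {g : (A × Measure B) → Measure B} (hg : Measurable g)
    (hcb : IsCondBar γ (fun z => g z.2)) {E : Set B} (hE : MeasurableSet E) :
    ∀ᵐ y ∂ν, g y E = ∫⁻ x, x.2 E ∂κ y := by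
  have hEm : Measurable fun m : Measure B => m E := Measure.measurable_coe hE
  have hgE : Measurable fun y => g y E := hEm.comp hg
  have hxE : Measurable fun x : A × Measure B => x.2 E := hEm.comp measurable_snd
  refine ae_eq_of_forall_setLIntegral_eq_of_sigmaFinite hgE hxE.lintegral_kernel ?_
  intro S hS _
  have h1 : ∫⁻ y in S, g y E ∂ν = ∫⁻ z in {z | z.2 ∈ S}, g z.2 E ∂γ := by
    rw [← h.2, setLIntegral_map hS hgE measurable_snd]; rfl
  have hwE : Measurable fun w : (A × Measure B) × (A × Measure B) => w.2.2 E :=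
    hxE.comp measurable_snd
  have h2 := Measure.setLIntegral_compProd (μ := ν) (κ := κ) hwE hS MeasurableSet.univ
  rw [hκ, setLIntegral_map (hS.prod MeasurableSet.univ) hwE measurable_swap] at h2
  simp only [Measure.restrict_univ] at h2
  rw [h1, hcb.2.2 S hS E hE, ← h2]
  congr 2
  ext z
  simp

lemma disint_bind (hμ : ∀ᵐ z ∂μ, IsProbabilityMeasure z.2)
    {γ : Measure ((A × Measure B) × (A × Measure B))} (h : γ ∈ Cpl μ ν)
    {κ : Kernel (A × Measure B) (A × Measure B)} [IsMarkovKernel κ]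
    (hκ : ν ⊗ₘ κ = γ.map Prod.swap) {g : (A × Measure B) → Measure B} (hg : Measurable g)
    (hcb : IsCondBar γ (fun z => g z.2)) :
    ∀ᵐ y ∂ν, g y = (κ y).bind Prod.snd := by
  refine ae_measure_eq ?_ ?_ ?_
  · exact Eventually.of_forall fun y => hcb.2.1 (y, y)
  · filter_upwards [disint_ae_prob hμ h hκ] with y hy
    exact bind_isProb (κ y) measurable_snd hy
  · intro E hE
    filter_upwards [disint_bar h hκ hg hcb hE] with y hy
    rw [hy, Measure.bind_apply hE measurable_snd.aemeasurable]

lemma disint_mom {p : ℝ} (x₀ : B) (hμ : ∀ᵐ z ∂μ, IsProbabilityMeasure z.2)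
    {γ : Measure ((A × Measure B) × (A × Measure B))} (h : γ ∈ Cpl μ ν)
    {κ : Kernel (A × Measure B) (A × Measure B)} [IsMarkovKernel κ]
    (hκ : ν ⊗ₘ κ = γ.map Prod.swap) {g : (A × Measure B) → Measure B} (hg : Measurable g)
    (hcb : IsCondBar γ (fun z => g z.2)) :
    ∫⁻ y, mom p x₀ (g y) ∂ν = ∫⁻ x, mom p x₀ x.2 ∂μ := by
  have hm : Measurable fun x : A × Measure B => mom p x₀ x.2 :=
    (measurable_mom p x₀).comp measurable_snd
  have h1 : ∫⁻ y, mom p x₀ (g y) ∂ν = ∫⁻ y, ∫⁻ x, mom p x₀ x.2 ∂κ y ∂ν := by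
    refine lintegral_congr_ae ?_
    filter_upwards [disint_bind hμ h hκ hg hcb] with y hy
    rw [hy, mom_bind x₀ (κ y) measurable_snd]
  rw [h1, disint_lintegral hκ (f := fun z => mom p x₀ z.1.2) (hm.comp measurable_fst), ← h.1,
    lintegral_map hm measurable_fst]

end Main

set_option linter.unusedSectionVars false

lemma two_minkowski {p : ℝ} (hp : 1 ≤ p) (a b c d : ℝ≥0∞) :
    (a + b) ^ p + (c + d) ^ p ≤ ((a ^ p + c ^ p) ^ (1 / p) + (b ^ p + d ^ p) ^ (1 / p)) ^ p := by
  have hp0 : 0 < p := by linarith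
  have h := ENNReal.Lp_add_le (Finset.univ : Finset (Fin 2)) ![a, c] ![b, d] hp
  simp only [Fin.sum_univ_two, Matrix.cons_val_zero, Matrix.cons_val_one] at h
  have h2 := ENNReal.rpow_le_rpow h hp0.le
  rwa [← ENNReal.rpow_mul, one_div_mul_cancel hp0.ne', ENNReal.rpow_one] at h2

section Main2

variable {A B : Type*} [MetricSpace A] [CompleteSpace A] [SecondCountableTopology A]
  [MeasurableSpace A] [BorelSpace A] [Nonempty A] [MetricSpace B] [CompleteSpace B]
  [SecondCountableTopology B] [MeasurableSpace B] [BorelSpace B] [Nonempty B]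

lemma main_step {p : ℝ} (hp : 1 ≤ p) {μ ν lam : Measure (A × Measure B)}
    (hμ : MemPpLift p edist edist μ) (hν : MemPpLift p edist edist ν)
    (hlam : MemPpLift p edist edist lam)
    {γ₁ γ₂ : Measure ((A × Measure B) × (A × Measure B))} (h₁ : γ₁ ∈ Cpl μ ν)
    (h₂ : γ₂ ∈ Cpl ν lam) {g₁ g₂ : A × Measure B → Measure B} (hg₁ : Measurable g₁)
    (hg₂ : Measurable g₂) (hc₁ : IsCondBar γ₁ (fun z => g₁ z.2))
    (hc₂ : IsCondBar γ₂ (fun z => g₂ z.2)) :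
    ∃ Γ ∈ Cpl μ lam, ∃ η, IsCondBar Γ η ∧
      (∫⁻ z, (edist z.1.1 z.2.1 ^ p + Wp p edist (η z) z.2.2 ^ p) ∂Γ) ^ (1 / p) ≤
        (∫⁻ z, (edist z.1.1 z.2.1 ^ p + Wp p edist (g₁ z.2) z.2.2 ^ p) ∂γ₁) ^ (1 / p) +
        (∫⁻ z, (edist z.1.1 z.2.1 ^ p + Wp p edist (g₂ z.2) z.2.2 ^ p) ∂γ₂) ^ (1 / p) := by
  have hp0 : 0 < p := by linarith
  obtain ⟨x₀⟩ := (inferInstance : Nonempty B)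
  have iμ := hμ.1
  have iν := hν.1
  have ilam := hlam.1
  have pμ : ∀ᵐ z ∂μ, IsProbabilityMeasure z.2 := hμ.2.1.mono fun z hz => hz.1
  have pν : ∀ᵐ z ∂ν, IsProbabilityMeasure z.2 := hν.2.1.mono fun z hz => hz.1
  have plam : ∀ᵐ z ∂lam, IsProbabilityMeasure z.2 := hlam.2.1.mono fun z hz => hz.1
  have mμ := MemPpLift.mom hp x₀ hμ
  have mν := MemPpLift.mom hp x₀ hν
  have mlam := MemPpLift.mom hp x₀ hlam
  obtain ⟨κ₁, iκ₁, hκ₁⟩ := exists_disint pμ h₁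
  obtain ⟨κ₂, iκ₂, hκ₂⟩ := exists_disint pν h₂
  have pg₁ : ∀ y, IsProbabilityMeasure (g₁ y) := fun y => hc₁.2.1 (y, y)
  have pg₂ : ∀ y, IsProbabilityMeasure (g₂ y) := fun y => hc₂.2.1 (y, y)
  have b₁ := disint_bind pμ h₁ hκ₁ hg₁ hc₁
  have b₂ := disint_bind pν h₂ hκ₂ hg₂ hc₂
  have mg₁ : ∫⁻ y, mom p x₀ (g₁ y) ∂ν ≠ ∞ := by rwa [disint_mom x₀ pμ h₁ hκ₁ hg₁ hc₁]
  have mg₂ : ∫⁻ y, mom p x₀ (g₂ y) ∂lam ≠ ∞ := by rwa [disint_mom x₀ pν h₂ hκ₂ hg₂ hc₂]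
  -- the glued measure
  have e2s : (lam ⊗ₘ κ₂).map Prod.snd = ν := by
    rw [hκ₂, Measure.map_map measurable_snd measurable_swap, ← h₂.1]; rfl
  have e2f : (lam ⊗ₘ κ₂).map Prod.fst = lam := Measure.fst_compProd _ _
  set Θ := glue (lam ⊗ₘ κ₂) κ₁ with hΘ
  have t1 : Θ.map Prod.fst = lam ⊗ₘ κ₂ := glue_map_fst _ _
  have t2 : Θ.map (fun t => (t.1.2, t.2)) = γ₁.map Prod.swap := by
    rw [hΘ, glue_map_snd, e2s, hκ₁]
  have t2' : Θ.map (fun t => (t.2, t.1.2)) = γ₁ := by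
    have : Θ.map (fun t => (t.2, t.1.2)) = (Θ.map (fun t => (t.1.2, t.2))).map Prod.swap := by
      rw [Measure.map_map measurable_swap (by fun_prop)]; rfl
    rw [this, t2, Measure.map_map measurable_swap measurable_swap]
    simp
  have t1' : Θ.map (fun t => (t.1.2, t.1.1)) = γ₂ := by
    have : Θ.map (fun t => (t.1.2, t.1.1)) = (Θ.map Prod.fst).map Prod.swap := by
      rw [Measure.map_map measurable_swap (by fun_prop)]; rfl
    rw [this, t1, hκ₂, Measure.map_map measurable_swap measurable_swap]
    simp
  have tz : Θ.map (fun t => t.1.1) = lam := by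
    rw [← e2f, ← t1, Measure.map_map measurable_fst measurable_fst]; rfl
  have tx : Θ.map (fun t => t.2) = μ := by
    rw [← h₁.1, ← t2', Measure.map_map measurable_fst (by fun_prop)]; rfl
  have hφ : Measurable fun t : ((A × Measure B) × (A × Measure B)) × (A × Measure B) =>
      (t.2, t.1.1) := by fun_prop
  set Γ := Θ.map (fun t => (t.2, t.1.1)) with hΓ
  let G : Kernel (A × Measure B) B := ⟨g₁, hg₁⟩
  have iG : IsMarkovKernel G := ⟨pg₁⟩
  let g : A × Measure B → Measure B := fun z => (κ₂ z).bind g₁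
  have hgG : g = (G ∘ₖ κ₂ : Kernel _ _) := by
    ext1 z
    rw [Kernel.comp_apply]; rfl
  have hg : Measurable g := by rw [hgG]; exact Kernel.measurable _
  have pg : ∀ z, IsProbabilityMeasure (g z) := by
    intro z; rw [hgG]; infer_instance
  refine ⟨Γ, ⟨?_, ?_⟩, fun w => g w.2, ⟨⟨g, hg, fun _ => rfl⟩, fun z => pg z.2, ?_⟩, ?_⟩
  · rw [hΓ, Measure.map_map measurable_fst hφ]; exact tx
  · rw [hΓ, Measure.map_map measurable_snd hφ]; exact tz
  · intro S hS E hE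
    have hEm : Measurable fun m : Measure B => m E := Measure.measurable_coe hE
    have hgE : Measurable fun y => g y E := hEm.comp hg
    have hg₁E : Measurable fun y => g₁ y E := hEm.comp hg₁
    have hxE : Measurable fun x : A × Measure B => x.2 E := hEm.comp measurable_snd
    have hSm : MeasurableSet {w : (A × Measure B) × (A × Measure B) | w.2 ∈ S} :=
      measurable_snd hS
    have hL : ∫⁻ w in {w | w.2 ∈ S}, g w.2 E ∂Γ = ∫⁻ u in S ×ˢ Set.univ, g₁ u.2 E ∂(lam ⊗ₘ κ₂) := by
      have hn1 : Measurable fun w : (A × Measure B) × (A × Measure B) => g w.2 E :=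
        hgE.comp measurable_snd
      have hn2 : Measurable fun w : (A × Measure B) × (A × Measure B) => g₁ w.2 E :=
        hg₁E.comp measurable_snd
      rw [hΓ, setLIntegral_map hSm hn1 hφ]
      rw [Measure.setLIntegral_compProd hn2 hS MeasurableSet.univ]
      conv_rhs => rw [← tz]
      rw [setLIntegral_map hS _ (by fun_prop)]
      · simp only [Measure.restrict_univ, g,
          Measure.bind_apply hE hg₁.aemeasurable]
        rfl
      · simp only [Measure.restrict_univ]
        exact hg₁E.lintegral_kernel
    have hR : ∫⁻ w in {w | w.2 ∈ S}, w.1.2 E ∂Γ =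
        ∫⁻ u in S ×ˢ Set.univ, (∫⁻ x, x.2 E ∂κ₁ u.2) ∂(lam ⊗ₘ κ₂) := by
      have hm1 : Measurable fun w : (A × Measure B) × (A × Measure B) => w.1.2 E :=
        hxE.comp measurable_fst
      have hm2 : Measurable fun t : ((A × Measure B) × (A × Measure B)) × (A × Measure B) =>
        t.2.2 E := hxE.comp measurable_snd
      rw [hΓ, setLIntegral_map hSm hm1 hφ]
      have := Measure.setLIntegral_compProd (μ := lam ⊗ₘ κ₂)
        (κ := κ₁.comap Prod.snd measurable_snd) hm2 (hS.prod MeasurableSet.univ)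
        MeasurableSet.univ
      simp only [Measure.restrict_univ, Kernel.comap_apply] at this
      rw [← this]
      simp only [hΘ, glue]
      congr 2
      ext t
      simp
    rw [hL, hR]
    have hae : ∀ᵐ u ∂(lam ⊗ₘ κ₂), g₁ u.2 E = ∫⁻ x, x.2 E ∂κ₁ u.2 := by
      have h := disint_bar h₁ hκ₁ hg₁ hc₁ hE
      rw [← e2s] at h
      exact ae_of_ae_map measurable_snd.aemeasurable h
    exact lintegral_congr_ae (ae_restrict_of_ae hae)
  · -- the cost estimate
    have hWm : Measurable (What p x₀) := measurable_What hp x₀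
    set w₁ : A × Measure B → ℝ≥0∞ := fun y => What p x₀ (g₁ y, y.2) with hw₁
    set w₂ : A × Measure B → ℝ≥0∞ := fun y => What p x₀ (g₂ y, y.2) with hw₂
    have mw₁ : Measurable w₁ := hWm.comp (hg₁.prodMk measurable_snd)
    have mw₂ : Measurable w₂ := hWm.comp (hg₂.prodMk measurable_snd)
    have hmm : Measurable fun x : A × Measure B => mom p x₀ x.2 :=
      (measurable_mom p x₀).comp measurable_snd
    have a₁ : ∀ᵐ y ∂ν, w₁ y = Wp p edist (g₁ y) y.2 := by
      filter_upwards [pν, ae_lt_top ((measurable_mom p x₀).comp hg₁) mg₁, ae_lt_top hmm mν]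
        with y i1 i2 i3
      exact What_eq hp x₀ _ _ i2.ne i3.ne
    have a₂ : ∀ᵐ y ∂lam, w₂ y = Wp p edist (g₂ y) y.2 := by
      filter_upwards [plam, ae_lt_top ((measurable_mom p x₀).comp hg₂) mg₂, ae_lt_top hmm mlam]
        with y i1 i2 i3
      exact What_eq hp x₀ _ _ i2.ne i3.ne
    set U : A × Measure B → ℝ≥0∞ := fun z => (∫⁻ y, w₁ y ^ p ∂κ₂ z) ^ (1 / p) with hU
    have mU : Measurable U := ((mw₁.pow_const p).lintegral_kernel).pow_const _
    -- pointwise bound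
    have hbound : ∀ᵐ z ∂lam, Wp p edist (g z) z.2 ≤ U z + w₂ z := by
      have q1 : ∀ᵐ z ∂lam, ∀ᵐ y ∂κ₂ z, w₁ y = Wp p edist (g₁ y) y.2 := by
        rw [← e2s] at a₁
        exact Measure.ae_ae_of_ae_compProd (ae_of_ae_map measurable_snd.aemeasurable a₁)
      have q2 := disint_ae_prob pν h₂ hκ₂
      have key : ∀ f : A × Measure B → ℝ≥0∞, Measurable f → ∫⁻ y, f y ∂ν ≠ ∞ →
          ∀ᵐ z ∂lam, ∫⁻ y, f y ∂κ₂ z ≠ ∞ := by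
        intro f hf hfin
        refine (ae_lt_top hf.lintegral_kernel ?_).mono fun z hz => hz.ne
        rwa [disint_lintegral hκ₂ (f := fun z => f z.1) (hf.comp measurable_fst),
          ← lintegral_map hf measurable_fst, h₂.1]
      have q3 := key _ ((measurable_mom p x₀).comp hg₁) mg₁
      have q4 := key _ hmm mν
      filter_upwards [q1, q2, q3, q4, b₂, a₂] with z r1 r2 r3 r4 r5 r6
      have := pg z
      have := pg₂ z
      rw [r6]
      refine (Wp_triangle hp (g z) (g₂ z) z.2).trans ?_
      gcongr
      have hj := Wp_jensen hp x₀ (κ₂ z) hg₁ (Eventually.of_forall pg₁) measurable_snd r2 r3 r4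
      rw [← r5] at hj
      refine hj.trans_eq ?_
      simp only [hU]
      congr 1
      refine lintegral_congr_ae ?_
      filter_upwards [r1] with y hy
      rw [hy]
    set u : ((A × Measure B) × (A × Measure B)) × (A × Measure B) → ℝ≥0∞ := fun t =>
      (edist t.2.1 t.1.2.1 ^ p + U t.1.1 ^ p) ^ (1 / p) with hu
    set v : ((A × Measure B) × (A × Measure B)) × (A × Measure B) → ℝ≥0∞ := fun t =>
      (edist t.1.2.1 t.1.1.1 ^ p + w₂ t.1.1 ^ p) ^ (1 / p) with hv
    have mu : Measurable u := by fun_prop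
    have mv : Measurable v := by fun_prop
    have ru : ∀ t, u t ^ p = edist t.2.1 t.1.2.1 ^ p + U t.1.1 ^ p := by
      intro t
      simp only [hu, ← ENNReal.rpow_mul, one_div_mul_cancel hp0.ne', ENNReal.rpow_one]
    have rv : ∀ t, v t ^ p = edist t.1.2.1 t.1.1.1 ^ p + w₂ t.1.1 ^ p := by
      intro t
      simp only [hv, ← ENNReal.rpow_mul, one_div_mul_cancel hp0.ne', ENNReal.rpow_one]
    have hmain : ∫⁻ z, (edist z.1.1 z.2.1 ^ p + Wp p edist (g z.2) z.2.2 ^ p) ∂Γ ≤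
        ∫⁻ t, (u + v) t ^ p ∂Θ := by
      refine (lintegral_map_le _ _).trans (lintegral_mono_ae ?_)
      rw [← tz] at hbound
      filter_upwards [ae_of_ae_map (by fun_prop) hbound] with t ht
      refine le_trans ?_ (two_minkowski hp _ _ _ _)
      gcongr
      exact edist_triangle _ _ _
    have hcu : ∫⁻ t, u t ^ p ∂Θ =
        ∫⁻ z, (edist z.1.1 z.2.1 ^ p + Wp p edist (g₁ z.2) z.2.2 ^ p) ∂γ₁ := by
      have s1 : ∫⁻ z, (edist z.1.1 z.2.1 ^ p + Wp p edist (g₁ z.2) z.2.2 ^ p) ∂γ₁ =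
          ∫⁻ z, (edist z.1.1 z.2.1 ^ p + w₁ z.2 ^ p) ∂γ₁ := by
        refine lintegral_congr_ae ?_
        rw [← h₁.2] at a₁
        filter_upwards [ae_of_ae_map measurable_snd.aemeasurable a₁] with z hz
        rw [hz]
      rw [s1, lintegral_add_left (by fun_prop)]
      simp only [ru]
      rw [lintegral_add_left (by fun_prop)]
      congr 1
      · conv_rhs => rw [← t2']
        rw [lintegral_map (by fun_prop) (by fun_prop)]
      · have s2 : ∫⁻ t, U t.1.1 ^ p ∂Θ = ∫⁻ z, U z ^ p ∂lam := by
          conv_rhs => rw [← tz]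
          rw [lintegral_map (by fun_prop) (by fun_prop)]
        have s3 : ∫⁻ z, w₁ z.2 ^ p ∂γ₁ = ∫⁻ y, w₁ y ^ p ∂ν := by
          conv_rhs => rw [← h₁.2]
          rw [lintegral_map (by fun_prop) (by fun_prop)]
        have s4 : ∫⁻ z, w₁ z.1 ^ p ∂γ₂ = ∫⁻ y, w₁ y ^ p ∂ν := by
          conv_rhs => rw [← h₂.1]
          rw [lintegral_map (by fun_prop) (by fun_prop)]
        rw [s2, s3, ← s4, ← disint_lintegral hκ₂ (f := fun z => w₁ z.1 ^ p) (by fun_prop)]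
        simp only [hU, ← ENNReal.rpow_mul, one_div_mul_cancel hp0.ne', ENNReal.rpow_one]
    have hcv : ∫⁻ t, v t ^ p ∂Θ =
        ∫⁻ z, (edist z.1.1 z.2.1 ^ p + Wp p edist (g₂ z.2) z.2.2 ^ p) ∂γ₂ := by
      have s1 : ∫⁻ z, (edist z.1.1 z.2.1 ^ p + Wp p edist (g₂ z.2) z.2.2 ^ p) ∂γ₂ =
          ∫⁻ z, (edist z.1.1 z.2.1 ^ p + w₂ z.2 ^ p) ∂γ₂ := by
        refine lintegral_congr_ae ?_
        rw [← h₂.2] at a₂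
        filter_upwards [ae_of_ae_map measurable_snd.aemeasurable a₂] with z hz
        rw [hz]
      rw [s1, ← t1', lintegral_map (by fun_prop) (by fun_prop)]
      simp only [rv]
    refine (ENNReal.rpow_le_rpow hmain (by positivity)).trans ?_
    refine (ENNReal.lintegral_Lp_add_le mu.aemeasurable mv.aemeasurable hp).trans ?_
    rw [hcu, hcv]

end Main2

/-- **Lemma 4.6 (triangle inequality).**  `CW̄_p(μ, λ) ≤ CW̄_p(μ, ν) + CW̄_p(ν, λ)`
on `𝒫_p(𝒳₁ × 𝒫_p(𝒳₂))`. -/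
theorem CWbar_triangle
    {X1 X2 : Type} [MetricSpace X1] [CompleteSpace X1] [SecondCountableTopology X1]
    [MeasurableSpace X1] [BorelSpace X1] [Nonempty X1]
    [MetricSpace X2] [CompleteSpace X2] [SecondCountableTopology X2]
    [MeasurableSpace X2] [BorelSpace X2] [Nonempty X2]
    (p : ℝ) (hp : 1 ≤ p)
    (μ ν lam : Measure (X1 × Measure X2))
    (hμ : MemPpLift p (edist : X1 → X1 → ℝ≥0∞) (edist : X2 → X2 → ℝ≥0∞) μ)
    (hν : MemPpLift p (edist : X1 → X1 → ℝ≥0∞) (edist : X2 → X2 → ℝ≥0∞) ν)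
    (hlam : MemPpLift p (edist : X1 → X1 → ℝ≥0∞) (edist : X2 → X2 → ℝ≥0∞) lam) :
    CWbar p (edist : X1 → X1 → ℝ≥0∞) (edist : X2 → X2 → ℝ≥0∞) μ lam ≤
      CWbar p edist edist μ ν + CWbar p edist edist ν lam := by
  refine ENNReal.le_of_forall_pos_le_add fun ε hε hfin => ?_
  obtain ⟨f1, f2⟩ := ENNReal.add_lt_top.1 hfin
  have hε2 : (ε / 2 : ℝ≥0∞) ≠ 0 := by
    have : (ε : ℝ≥0∞) ≠ 0 := by exact_mod_cast hε.ne'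
    simpa using this
  have l1 := ENNReal.lt_add_right f1.ne hε2
  have l2 := ENNReal.lt_add_right f2.ne hε2
  conv at l1 => lhs; rw [CWbar]
  conv at l2 => lhs; rw [CWbar]
  simp only [iInf_lt_iff, Set.mem_setOf_eq, exists_prop] at l1 l2
  obtain ⟨γ₁, h₁, η₁, hc₁, k1⟩ := l1
  obtain ⟨γ₂, h₂, η₂, hc₂, k2⟩ := l2
  obtain ⟨g₁, hg₁, hη₁⟩ := hc₁.1
  obtain ⟨g₂, hg₂, hη₂⟩ := hc₂.1
  obtain rfl : η₁ = fun z => g₁ z.2 := funext hη₁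
  obtain rfl : η₂ = fun z => g₂ z.2 := funext hη₂
  obtain ⟨Γ, hΓ, η, hη, hle⟩ := main_step hp hμ hν hlam h₁ h₂ hg₁ hg₂ hc₁ hc₂
  have hCW : CWbar p (edist : X1 → X1 → ℝ≥0∞) (edist : X2 → X2 → ℝ≥0∞) μ lam ≤ _ :=
    (iInf₂_le Γ hΓ).trans (iInf₂_le η hη)
  refine hCW.trans (hle.trans ((add_le_add k1.le k2.le).trans_eq ?_))
  rw [add_add_add_comm, ENNReal.add_halves]

end AWPaper
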